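/- arXiv:2602.01110 — 2 statements merged into one kernel-verified Lean document; each statement's English description precedes it below -/
import Mathlib

section
/- Let Γ be a generalised hexagon of finite order (s,t) with s > 1 and t > 1, and let S be a set of s+1 points of Γ such that no point of Γ is opposite every member of S. Then S is either (i) the point set of a line of Γ, or (ii) a hyperbolic line of Γ, in which case s = t, or (iii) a regular distance-3 trace of Γ, in which case s ≥ t. -/
/-- An incidence structure of points and lines, each line being a set of points. -/
structure GenHexagon where
  Point : Type
  Line : Type
  pts : Line → Set Point

namespace GenHexagon

variable (Γ : GenHexagon)

/-- Adjacency of the bipartite incidence graph on the disjoint union of points and lines: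
a point is adjacent to a line iff the point lies on the line. -/
def incAdj : Γ.Point ⊕ Γ.Line → Γ.Point ⊕ Γ.Line → Prop
  | Sum.inl x, Sum.inr L => x ∈ Γ.pts L
  | Sum.inr L, Sum.inl x => x ∈ Γ.pts L
  | _, _ => False

/-- The bipartite incidence graph. -/
def incGraph : SimpleGraph (Γ.Point ⊕ Γ.Line) where
  Adj := Γ.incAdj
  symm := ⟨by rintro (x | L) (y | M) h <;> simp_all [incAdj]⟩
  loopless := ⟨by rintro (x | L) h <;> simp_all [incAdj]⟩

/-- `Γ` is a generalised hexagon: its incidence graph has diameter `6` and girth `12`. -/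
def IsGenHexagon : Prop :=
  Γ.incGraph.ediam = 6 ∧ Γ.incGraph.egirth = 12

/-- Two points are collinear if they are distinct and some line contains both. -/
def Collinear (x y : Γ.Point) : Prop :=
  x ≠ y ∧ ∃ L, x ∈ Γ.pts L ∧ y ∈ Γ.pts L

/-- Two points are special if they are distinct, non-collinear, and collinear
to a common point. -/
def Special (x y : Γ.Point) : Prop :=
  x ≠ y ∧ ¬ Γ.Collinear x y ∧ ∃ z, Γ.Collinear x z ∧ Γ.Collinear y z

/-- Two points are opposite if they are distinct, non-collinear and non-special. -/
def Opposite (x y : Γ.Point) : Prop :=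
  x ≠ y ∧ ¬ Γ.Collinear x y ∧ ¬ Γ.Special x y

/-- `Γ` has order `(s, t)`: every line contains exactly `s + 1` points and every
point lies on exactly `t + 1` lines. -/
def HasOrder (s t : ℕ) : Prop :=
  (∀ L, (Γ.pts L).encard = s + 1) ∧ (∀ x, {L | x ∈ Γ.pts L}.encard = t + 1)

/-- `Γ` is thick: every line contains at least `3` points and every point lies on
at least `3` lines. -/
def Thick : Prop :=
  (∀ L, 3 ≤ (Γ.pts L).encard) ∧ (∀ x, 3 ≤ {L | x ∈ Γ.pts L}.encard)

/-- A point is close to a line if it is collinear to exactly one point of that line. -/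
def CloseTo (x : Γ.Point) (L : Γ.Line) : Prop :=
  ∃! y, y ∈ Γ.pts L ∧ Γ.Collinear x y

/-- Two lines are opposite if they are disjoint and no point of one is collinear to
a point of the other. -/
def OppLines (L M : Γ.Line) : Prop :=
  (∀ x ∈ Γ.pts L, x ∉ Γ.pts M) ∧
  (∀ x ∈ Γ.pts L, ∀ y ∈ Γ.pts M, ¬ Γ.Collinear x y)

/-- The distance-3 trace `[L,M]₃` of two (opposite) lines: the set of points close to
both `L` and `M`. -/
def trace3 (L M : Γ.Line) : Set Γ.Point :=
  {x | Γ.CloseTo x L ∧ Γ.CloseTo x M}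

/-- The distance-3 trace `[L,M]₃` is regular if `[N,M]₃ = [L,M]₃` for every line `N`
opposite `M` such that `[N,M]₃` and `[L,M]₃` share at least two points. -/
def RegularTrace3 (L M : Γ.Line) : Prop :=
  ∀ N, Γ.OppLines N M → (Γ.trace3 N M ∩ Γ.trace3 L M).Nontrivial →
    Γ.trace3 N M = Γ.trace3 L M

/-- A hyperbolic line: a set `H` of pairwise special points, all collinear to a common
point `p`, such that for every point `q` opposite `p` to which at least two points of `H`
are special, the set of points special to `q` and collinear to `p` equals `H`. -/
def IsHyperbolicLine (H : Set Γ.Point) : Prop :=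
  (∀ x ∈ H, ∀ y ∈ H, x ≠ y → Γ.Special x y) ∧
  ∃ p, (∀ x ∈ H, Γ.Collinear x p) ∧
    ∀ q, Γ.Opposite q p → {x ∈ H | Γ.Special q x}.Nontrivial →
      {x | Γ.Special q x ∧ Γ.Collinear x p} = H

/-- A round-up triple: no point of `Γ` is opposite exactly one of `x₁, x₂, x₃`. -/
def RoundUpTriple (x₁ x₂ x₃ : Γ.Point) : Prop :=
  ∀ y : Γ.Point,
    ¬ ((Γ.Opposite y x₁ ∧ ¬ Γ.Opposite y x₂ ∧ ¬ Γ.Opposite y x₃) ∨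
       (¬ Γ.Opposite y x₁ ∧ Γ.Opposite y x₂ ∧ ¬ Γ.Opposite y x₃) ∨
       (¬ Γ.Opposite y x₁ ∧ ¬ Γ.Opposite y x₂ ∧ Γ.Opposite y x₃))

/-- A geometric line: a set `T` of points such that each point of `Γ` is either opposite
no member of `T`, or non-opposite to exactly one member of `T`. -/
def IsGeometricLine (T : Set Γ.Point) : Prop :=
  ∀ y : Γ.Point, (∀ x ∈ T, ¬ Γ.Opposite y x) ∨ (∃! x, x ∈ T ∧ ¬ Γ.Opposite y x)

end GenHexagon

namespace GenHexagon

variable {Γ : GenHexagon}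

/-- The combinatorial form of the hexagon conditions: there are no ordinary `k`-gons for `k ≤ 5`,
and every line has a point that is not opposite a given point. -/
structure IsHex (Γ : GenHexagon) : Prop where
  line_unique : ∀ {x y : Γ.Point} {L M : Γ.Line}, x ≠ y → x ∈ Γ.pts L → y ∈ Γ.pts L →
    x ∈ Γ.pts M → y ∈ Γ.pts M → L = M
  no_triangle : ∀ {x a b : Γ.Point} {L : Γ.Line}, a ≠ b → a ∈ Γ.pts L → b ∈ Γ.pts L →
    Γ.Collinear x a → Γ.Collinear x b → x ∈ Γ.pts L
  no_quadrangle : ∀ {x y z w : Γ.Point}, x ≠ y → ¬ Γ.Collinear x y → Γ.Collinear x z →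
    Γ.Collinear y z → Γ.Collinear x w → Γ.Collinear y w → z = w
  no_pentagon : ∀ {x a b : Γ.Point} {L : Γ.Line}, a ≠ b → a ∈ Γ.pts L → b ∈ Γ.pts L →
    Γ.Special x a → Γ.Special x b → ∃ c ∈ Γ.pts L, Γ.Collinear x c
  exists_not_opposite : ∀ (x : Γ.Point) (L : Γ.Line), ∃ y ∈ Γ.pts L, ¬ Γ.Opposite x y

theorem incGraph_adj_point_line {x : Γ.Point} {L : Γ.Line} :
    Γ.incGraph.Adj (Sum.inl x) (Sum.inr L) ↔ x ∈ Γ.pts L := Iff.rfl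

theorem incGraph_adj_line_point {x : Γ.Point} {L : Γ.Line} :
    Γ.incGraph.Adj (Sum.inr L) (Sum.inl x) ↔ x ∈ Γ.pts L := Iff.rfl

theorem not_incGraph_adj_point_point {x y : Γ.Point} :
    ¬ Γ.incGraph.Adj (Sum.inl x) (Sum.inl y) := fun h => h

theorem not_incGraph_adj_line_line {L M : Γ.Line} :
    ¬ Γ.incGraph.Adj (Sum.inr L) (Sum.inr M) := fun h => h

section Girth

theorem twelve_le_length_of_isCycle (hg : Γ.incGraph.egirth = 12)
    {a : Γ.Point ⊕ Γ.Line} {w : Γ.incGraph.Walk a a}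
    (hw : w.IsCycle) : 12 ≤ w.length := by
  have h := SimpleGraph.egirth_le_length hw
  rw [hg] at h
  exact_mod_cast h

theorem no_ordinary_digon (hg : Γ.incGraph.egirth = 12)
    {x y : Γ.Point} {L M : Γ.Line} (hxy : x ≠ y) (hLM : L ≠ M)
    (h₁ : x ∈ Γ.pts L) (h₂ : y ∈ Γ.pts L) (h₃ : y ∈ Γ.pts M) (h₄ : x ∈ Γ.pts M) : False := by
  let w : Γ.incGraph.Walk (Sum.inl x) (Sum.inl x) :=
    .cons (incGraph_adj_point_line.2 h₁) <| .cons (incGraph_adj_line_point.2 h₂) <|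
    .cons (incGraph_adj_point_line.2 h₃) <| .cons (incGraph_adj_line_point.2 h₄) .nil
  have hw : w.IsCycle := by
    simp [w, SimpleGraph.Walk.cons_isCycle_iff, SimpleGraph.Walk.cons_isPath_iff]
    grind
  have := twelve_le_length_of_isCycle hg hw
  simp [w] at this

theorem no_ordinary_triangle (hg : Γ.incGraph.egirth = 12)
    {x y z : Γ.Point} {L M N : Γ.Line}
    (hp : [x, y, z].Nodup) (hl : [L, M, N].Nodup)
    (h₁ : x ∈ Γ.pts L) (h₂ : y ∈ Γ.pts L) (h₃ : y ∈ Γ.pts M) (h₄ : z ∈ Γ.pts M)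
    (h₅ : z ∈ Γ.pts N) (h₆ : x ∈ Γ.pts N) : False := by
  let w : Γ.incGraph.Walk (Sum.inl x) (Sum.inl x) :=
    .cons (incGraph_adj_point_line.2 h₁) <| .cons (incGraph_adj_line_point.2 h₂) <|
    .cons (incGraph_adj_point_line.2 h₃) <| .cons (incGraph_adj_line_point.2 h₄) <|
    .cons (incGraph_adj_point_line.2 h₅) <| .cons (incGraph_adj_line_point.2 h₆) .nil
  have hw : w.IsCycle := by
    simp at hp hl
    simp [w, SimpleGraph.Walk.cons_isCycle_iff, SimpleGraph.Walk.cons_isPath_iff]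
    grind
  have := twelve_le_length_of_isCycle hg hw
  simp [w] at this

theorem no_ordinary_quadrangle (hg : Γ.incGraph.egirth = 12)
    {x y z u : Γ.Point} {L M N K : Γ.Line}
    (hp : [x, y, z, u].Nodup) (hl : [L, M, N, K].Nodup)
    (h₁ : x ∈ Γ.pts L) (h₂ : y ∈ Γ.pts L) (h₃ : y ∈ Γ.pts M) (h₄ : z ∈ Γ.pts M)
    (h₅ : z ∈ Γ.pts N) (h₆ : u ∈ Γ.pts N) (h₇ : u ∈ Γ.pts K) (h₈ : x ∈ Γ.pts K) : False := by
  let w : Γ.incGraph.Walk (Sum.inl x) (Sum.inl x) :=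
    .cons (incGraph_adj_point_line.2 h₁) <| .cons (incGraph_adj_line_point.2 h₂) <|
    .cons (incGraph_adj_point_line.2 h₃) <| .cons (incGraph_adj_line_point.2 h₄) <|
    .cons (incGraph_adj_point_line.2 h₅) <| .cons (incGraph_adj_line_point.2 h₆) <|
    .cons (incGraph_adj_point_line.2 h₇) <| .cons (incGraph_adj_line_point.2 h₈) .nil
  have hw : w.IsCycle := by
    simp at hp hl
    simp [w, SimpleGraph.Walk.cons_isCycle_iff, SimpleGraph.Walk.cons_isPath_iff]
    grind
  have := twelve_le_length_of_isCycle hg hw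
  simp [w] at this

theorem no_ordinary_pentagon (hg : Γ.incGraph.egirth = 12)
    {x y z u v : Γ.Point} {L M N K J : Γ.Line}
    (hp : [x, y, z, u, v].Nodup) (hl : [L, M, N, K, J].Nodup)
    (h₁ : x ∈ Γ.pts L) (h₂ : y ∈ Γ.pts L) (h₃ : y ∈ Γ.pts M) (h₄ : z ∈ Γ.pts M)
    (h₅ : z ∈ Γ.pts N) (h₆ : u ∈ Γ.pts N) (h₇ : u ∈ Γ.pts K) (h₈ : v ∈ Γ.pts K)
    (h₉ : v ∈ Γ.pts J) (h₁₀ : x ∈ Γ.pts J) : False := by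
  let w : Γ.incGraph.Walk (Sum.inl x) (Sum.inl x) :=
    .cons (incGraph_adj_point_line.2 h₁) <| .cons (incGraph_adj_line_point.2 h₂) <|
    .cons (incGraph_adj_point_line.2 h₃) <| .cons (incGraph_adj_line_point.2 h₄) <|
    .cons (incGraph_adj_point_line.2 h₅) <| .cons (incGraph_adj_line_point.2 h₆) <|
    .cons (incGraph_adj_point_line.2 h₇) <| .cons (incGraph_adj_line_point.2 h₈) <|
    .cons (incGraph_adj_point_line.2 h₉) <| .cons (incGraph_adj_line_point.2 h₁₀) .nil
  have hw : w.IsCycle := by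
    simp at hp hl
    simp [w, SimpleGraph.Walk.cons_isCycle_iff, SimpleGraph.Walk.cons_isPath_iff]
    grind
  have := twelve_le_length_of_isCycle hg hw
  simp [w] at this

end Girth

theorem exists_not_opposite_of_ediam (hd : Γ.incGraph.ediam = 6) (x : Γ.Point) (L : Γ.Line) :
    ∃ y ∈ Γ.pts L, ¬ Γ.Opposite x y := by
  have hle : Γ.incGraph.edist (Sum.inl x) (Sum.inr L) ≤ 6 := hd ▸ SimpleGraph.edist_le_ediam
  have hreach : Γ.incGraph.Reachable (Sum.inl x) (Sum.inr L) := by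
    by_contra h
    rw [SimpleGraph.edist_eq_top_of_not_reachable h] at hle
    exact absurd hle (by decide)
  obtain ⟨w, hw⟩ := hreach.exists_walk_length_eq_edist
  rw [← hw] at hle
  have hlen : w.length ≤ 6 := by exact_mod_cast hle
  clear hw hle hreach
  have hcol : ∀ {a b : Γ.Point} {M : Γ.Line}, a ∈ Γ.pts M → b ∈ Γ.pts M →
      a = b ∨ Γ.Collinear a b := fun {a b M} ha hb => by
    by_cases h : a = b
    · exact Or.inl h
    · exact Or.inr ⟨h, M, ha, hb⟩
  have hnear : ∀ {a b c : Γ.Point}, (a = b ∨ Γ.Collinear a b) → (b = c ∨ Γ.Collinear b c) →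
      ¬ Γ.Opposite a c := by
    rintro a b c h₁ h₂ ⟨hne, hncol, hnsp⟩
    rcases h₁ with rfl | h₁ <;> rcases h₂ with rfl | h₂
    · exact hne rfl
    · exact hncol h₂
    · exact hncol h₁
    · exact hnsp ⟨hne, hncol, b, h₁, h₂.1.symm, h₂.2.imp fun _ h => h.symm⟩
  cases w with
  | @cons _ v₁ _ a₁ w₁ =>
  rcases v₁ with y | M₁
  · exact (not_incGraph_adj_point_point a₁).elim
  cases w₁ with
  | nil => exact ⟨x, a₁, fun h => h.1 rfl⟩
  | @cons _ v₂ _ a₂ w₂ =>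
  rcases v₂ with y | M'
  swap
  · exact (not_incGraph_adj_line_line a₂).elim
  cases w₂ with
  | @cons _ v₃ _ a₃ w₃ =>
  rcases v₃ with z | M₂
  · exact (not_incGraph_adj_point_point a₃).elim
  cases w₃ with
  | nil => exact ⟨y, a₃, hnear (Or.inl rfl) (hcol (incGraph_adj_point_line.1 a₁) a₂)⟩
  | @cons _ v₄ _ a₄ w₄ =>
  rcases v₄ with z | M'
  swap
  · exact (not_incGraph_adj_line_line a₄).elim
  cases w₄ with
  | @cons _ v₅ _ a₅ w₅ =>
  rcases v₅ with z' | M₃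
  · exact (not_incGraph_adj_point_point a₅).elim
  cases w₅ with
  | nil =>
    exact ⟨z, a₅, hnear (hcol (incGraph_adj_point_line.1 a₁) a₂)
      (hcol (incGraph_adj_point_line.1 a₃) a₄)⟩
  | @cons _ v₆ _ a₆ w₆ =>
  cases w₆ with
  | nil => exact (not_incGraph_adj_line_line a₆).elim
  | cons a₇ w₇ =>
    simp at hlen
    omega

theorem Collinear.symm {x y : Γ.Point} (h : Γ.Collinear x y) : Γ.Collinear y x :=
  ⟨h.1.symm, h.2.imp fun _ h => h.symm⟩

/-- A generalised hexagon satisfies the combinatorial conditions. -/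
theorem IsGenHexagon.isHex (hΓ : Γ.IsGenHexagon) : Γ.IsHex := by
  obtain ⟨hd, hg⟩ := hΓ
  have line_unique : ∀ {x y : Γ.Point} {L M : Γ.Line}, x ≠ y → x ∈ Γ.pts L → y ∈ Γ.pts L →
      x ∈ Γ.pts M → y ∈ Γ.pts M → L = M := by
    intro x y L M hxy h₁ h₂ h₃ h₄
    by_contra hLM
    exact no_ordinary_digon hg hxy hLM h₁ h₂ h₄ h₃
  have no_triangle : ∀ {x a b : Γ.Point} {L : Γ.Line}, a ≠ b → a ∈ Γ.pts L → b ∈ Γ.pts L →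
      Γ.Collinear x a → Γ.Collinear x b → x ∈ Γ.pts L := by
    rintro x a b L hab ha hb ⟨hxa, M, hxM, haM⟩ ⟨hxb, N, hxN, hbN⟩
    by_contra hx
    refine no_ordinary_triangle hg (x := x) (y := a) (z := b) (L := M) (M := L) (N := N)
      ?_ ?_ hxM haM ha hb hbN hxN
    · simp; grind
    · simp; grind
  have no_quadrangle : ∀ {x y z w : Γ.Point}, x ≠ y → ¬ Γ.Collinear x y → Γ.Collinear x z →
      Γ.Collinear y z → Γ.Collinear x w → Γ.Collinear y w → z = w := by
    intro x y z w hxy hnc hxz hyz hxw hyw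
    by_contra hzw
    obtain ⟨h₁, L, hxL, hzL⟩ := id hxz
    obtain ⟨h₂, M, hyM, hzM⟩ := id hyz
    obtain ⟨h₃, N, hxN, hwN⟩ := id hxw
    obtain ⟨h₄, K, hyK, hwK⟩ := id hyw
    have e₁ : L ≠ M := by rintro rfl; exact hnc ⟨hxy, L, hxL, hyM⟩
    have e₂ : L ≠ K := by rintro rfl; exact hnc ⟨hxy, L, hxL, hyK⟩
    have e₃ : M ≠ N := by rintro rfl; exact hnc ⟨hxy, M, hxN, hyM⟩
    have e₄ : N ≠ K := by rintro rfl; exact hnc ⟨hxy, N, hxN, hyK⟩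
    have e₅ : L ≠ N := by
      rintro rfl
      exact hnc ⟨hxy, L, hxL, no_triangle hzw hzL hwN hyz hyw⟩
    have e₆ : M ≠ K := by
      rintro rfl
      exact hnc ⟨hxy, M, no_triangle hzw hzM hwK hxz hxw, hyM⟩
    refine no_ordinary_quadrangle hg (x := x) (y := z) (z := y) (u := w)
      (L := L) (M := M) (N := K) (K := N) ?_ ?_ hxL hzL hzM hyM hyK hwK hwN hxN
    · simp; grind
    · simp; grind
  refine ⟨line_unique, no_triangle, no_quadrangle, ?_, exists_not_opposite_of_ediam hd⟩
  rintro x a b L hab ha hb ⟨hxa, hnxa, a', hxa', haa'⟩ ⟨hxb, hnxb, b', hxb', hbb'⟩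
  by_contra hno
  push Not at hno
  obtain ⟨h₁, L₁, hxL₁, haL₁⟩ := id hxa'
  obtain ⟨h₂, L₂, haL₂, ha'L₂⟩ := id haa'
  obtain ⟨h₃, L₃, hbL₃, hb'L₃⟩ := id hbb'
  obtain ⟨h₄, L₄, hxL₄, hb'L₄⟩ := id hxb'
  have hxL : x ∉ Γ.pts L := fun h => hno a ha ⟨hxa, L, h, ha⟩
  have ha'L : a' ∉ Γ.pts L := fun h => hno a' h hxa'
  have hb'L : b' ∉ Γ.pts L := fun h => hno b' h hxb'
  have hab' : a' ≠ b' := by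
    rintro rfl
    exact ha'L (no_triangle hab ha hb haa'.symm hbb'.symm)
  have hxL₂ : x ∉ Γ.pts L₂ := fun h => hnxa ⟨hxa, L₂, h, haL₂⟩
  have hxL₃ : x ∉ Γ.pts L₃ := fun h => hnxb ⟨hxb, L₃, h, hbL₃⟩
  have haL₁' : a ∉ Γ.pts L₁ := fun h => hnxa ⟨hxa, L₁, hxL₁, h⟩
  have hbL₁ : b ∉ Γ.pts L₁ := fun h => hnxb ⟨hxb, L₁, hxL₁, h⟩
  have e : L₂ ≠ L₃ := fun h => ha'L (line_unique hab haL₂ (h ▸ hbL₃) ha hb ▸ ha'L₂)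
  have e' : L₁ ≠ L₄ := by
    rintro rfl
    have hcol : Γ.Collinear a' b' := ⟨hab', L₁, haL₁, hb'L₄⟩
    have hncol : ¬ Γ.Collinear a b' := fun h => haL₁' (no_triangle hab' haL₁ hb'L₄ haa' h)
    have hne : a ≠ b' := fun h => hb'L (h ▸ ha)
    have := no_quadrangle hne hncol haa' hcol.symm ⟨hab, L, ha, hb⟩ hbb'.symm
    exact ha'L (this ▸ hb)
  refine no_ordinary_pentagon hg (x := x) (y := a') (z := a) (u := b) (v := b')
    (L := L₁) (M := L₂) (N := L) (K := L₃) (J := L₄) ?_ ?_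
    hxL₁ haL₁ ha'L₂ haL₂ ha hb hbL₃ hb'L₃ hb'L₄ hxL₄
  · simp; grind
  · simp; grind

end GenHexagon

namespace GenHexagon

variable {Γ : GenHexagon}

/-- A point is near a line if it lies on it or is collinear to one of its points. -/
def Near (Γ : GenHexagon) (x : Γ.Point) (L : Γ.Line) : Prop :=
  x ∈ Γ.pts L ∨ ∃ a ∈ Γ.pts L, Γ.Collinear x a

theorem Special.symm {x y : Γ.Point} (h : Γ.Special x y) : Γ.Special y x :=
  ⟨h.1.symm, fun hc => h.2.1 hc.symm, h.2.2.imp fun _ h => h.symm⟩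

theorem Opposite.symm {x y : Γ.Point} (h : Γ.Opposite x y) : Γ.Opposite y x :=
  ⟨h.1.symm, fun hc => h.2.1 hc.symm, fun hc => h.2.2 hc.symm⟩

theorem not_opposite_iff {x y : Γ.Point} :
    ¬ Γ.Opposite x y ↔ x = y ∨ Γ.Collinear x y ∨ Γ.Special x y := by
  unfold Opposite
  tauto

theorem Special.not_mem {x y : Γ.Point} {L : Γ.Line} (h : Γ.Special x y) (hy : y ∈ Γ.pts L) :
    x ∉ Γ.pts L :=
  fun hx => h.2.1 ⟨h.1, L, hx, hy⟩

theorem Special.not_opposite {x y : Γ.Point} (h : Γ.Special x y) : ¬ Γ.Opposite x y :=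
  fun ho => ho.2.2 h

theorem Collinear.not_opposite {x y : Γ.Point} (h : Γ.Collinear x y) : ¬ Γ.Opposite x y :=
  fun ho => ho.2.1 h

theorem not_opposite_self (x : Γ.Point) : ¬ Γ.Opposite x x :=
  fun ho => ho.1 rfl

namespace IsHex

theorem special_of_collinear (h : Γ.IsHex) {x a b : Γ.Point} {L : Γ.Line} (hx : x ∉ Γ.pts L)
    (ha : a ∈ Γ.pts L) (hb : b ∈ Γ.pts L) (hab : b ≠ a) (hxa : Γ.Collinear x a) :
    Γ.Special x b :=
  ⟨fun e => hx (e ▸ hb), fun hc => hx (h.no_triangle hab hb ha hc hxa), a, hxa,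
    hab, L, hb, ha⟩

/-- Points on two distinct lines through `p`, both different from `p`, are special. -/
theorem special_of_concurrent (h : Γ.IsHex) {x y p : Γ.Point} {L M : Γ.Line} (hLM : L ≠ M)
    (hpL : p ∈ Γ.pts L) (hpM : p ∈ Γ.pts M) (hx : x ∈ Γ.pts L) (hy : y ∈ Γ.pts M)
    (hxp : x ≠ p) (hyp : y ≠ p) : Γ.Special x y :=
  h.special_of_collinear (fun hxM => hLM (h.line_unique hxp hx hpL hxM hpM)) hpM hy hyp
    ⟨hxp, L, hx, hpL⟩

/-- A point far from a line is special to at most one of its points. -/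
theorem eq_of_special_of_far (h : Γ.IsHex) {x a b : Γ.Point} {L : Γ.Line} (hx : ¬ Γ.Near x L)
    (ha : a ∈ Γ.pts L) (hb : b ∈ Γ.pts L) (hxa : Γ.Special x a) (hxb : Γ.Special x b) :
    a = b := by
  by_contra hab
  exact hx (Or.inr (h.no_pentagon hab ha hb hxa hxb))

theorem not_opposite_of_near (h : Γ.IsHex) {x y : Γ.Point} {L : Γ.Line} (hx : Γ.Near x L)
    (hy : y ∈ Γ.pts L) : ¬ Γ.Opposite x y := by
  rw [not_opposite_iff]
  by_cases hxy : x = y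
  · exact Or.inl hxy
  refine Or.inr ?_
  by_cases hxL : x ∈ Γ.pts L
  · exact Or.inl ⟨hxy, L, hxL, hy⟩
  obtain hx | ⟨a, ha, hxa⟩ := hx
  · exact absurd hx hxL
  by_cases hya : y = a
  · exact Or.inl (hya ▸ hxa)
  · exact Or.inr (h.special_of_collinear hxL ha hy hya hxa)

theorem special_of_far_of_not_opposite {x y : Γ.Point} {L : Γ.Line} (hx : ¬ Γ.Near x L)
    (hy : y ∈ Γ.pts L) (hxy : ¬ Γ.Opposite x y) : Γ.Special x y := by
  rcases not_opposite_iff.1 hxy with rfl | hc | hsp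
  · exact absurd (Or.inl hy) hx
  · exact absurd (Or.inr ⟨y, hy, hc⟩) hx
  · exact hsp

theorem exists_special_of_far (h : Γ.IsHex) {x : Γ.Point} {L : Γ.Line} (hx : ¬ Γ.Near x L) :
    ∃ y ∈ Γ.pts L, Γ.Special x y := by
  obtain ⟨y, hy, hxy⟩ := h.exists_not_opposite x L
  exact ⟨y, hy, special_of_far_of_not_opposite hx hy hxy⟩

theorem opposite_of_far (h : Γ.IsHex) {x y z : Γ.Point} {L : Γ.Line} (hx : ¬ Γ.Near x L)
    (hy : y ∈ Γ.pts L) (hz : z ∈ Γ.pts L) (hxy : Γ.Special x y) (hyz : z ≠ y) :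
    Γ.Opposite x z := by
  by_contra hxz
  exact hyz (h.eq_of_special_of_far hx hz hy (special_of_far_of_not_opposite hx hz hxz) hxy)

/-- A path of length three in the collinearity graph, any two consecutive steps of which join
special points, joins opposite points. -/
theorem opposite_of_path (h : Γ.IsHex) {a b c d : Γ.Point} (hac : Γ.Special a c)
    (hbd : Γ.Special b d) (hab : Γ.Collinear a b) (hbc : Γ.Collinear b c)
    (hcd : Γ.Collinear c d) : Γ.Opposite a d := by
  have hnc : ¬ Γ.Collinear a d := fun had =>
    hbd.1 (h.no_quadrangle hac.1 hac.2.1 hab hbc.symm had hcd)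
  refine ⟨fun had => hac.2.1 (had ▸ hcd.symm), hnc, fun hsp => ?_⟩
  obtain ⟨hne, L, hcL, hdL⟩ := hcd
  obtain ⟨f, hf, haf⟩ := h.no_pentagon hne hcL hdL hac hsp
  have hcf : c ≠ f := fun e => hac.2.1 (e ▸ haf)
  have hbf : b = f := h.no_quadrangle hac.1 hac.2.1 hab hbc.symm haf ⟨hcf, L, hcL, hf⟩
  exact hbd.2.1 ⟨hbd.1, L, hbf ▸ hf, hdL⟩

theorem not_near_of_opposite (h : Γ.IsHex) {x y : Γ.Point} {L : Γ.Line} (hxy : Γ.Opposite x y)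
    (hy : y ∈ Γ.pts L) : ¬ Γ.Near x L :=
  fun hx => h.not_opposite_of_near hx hy hxy

/-- The lines different from `M` that meet `M` and are near a given point off `M` all meet `M`
in the same point. -/
theorem eq_of_near_of_near (h : Γ.IsHex) {w y y' : Γ.Point} {M K K' : Γ.Line}
    (hw : w ∉ Γ.pts M) (hyM : y ∈ Γ.pts M) (hyM' : y' ∈ Γ.pts M) (hyK : y ∈ Γ.pts K)
    (hyK' : y' ∈ Γ.pts K') (hK : K ≠ M) (hK' : K' ≠ M) (hwK : Γ.Near w K)
    (hwK' : Γ.Near w K') : y = y' := by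
  by_contra hne
  -- if `w` is collinear to a point of `M`, that point must lie on any such line
  have key : ∀ {z : Γ.Point} {N : Γ.Line} {c : Γ.Point}, z ∈ Γ.pts M → z ∈ Γ.pts N → N ≠ M →
      Γ.Near w N → c ∈ Γ.pts M → Γ.Collinear w c → z = c := by
    intro z N c hzM hzN hN hwN hcM hwc
    by_contra hzc
    obtain ⟨-, C, hwC, hcC⟩ := id hwc
    have hsp := h.special_of_collinear hw hcM hzM hzc hwc
    have hwN' : w ∉ Γ.pts N := hsp.not_mem hzN
    obtain hwN | ⟨a, ha, hwa⟩ := hwN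
    · exact hwN' hwN
    have haz : z ≠ a := fun e => hsp.2.1 (e ▸ hwa)
    have hca : c = a := h.no_quadrangle hsp.1 hsp.2.1 hwc ⟨hzc, M, hzM, hcM⟩ hwa
      ⟨haz, N, hzN, ha⟩
    exact hN (h.line_unique hzc hzN (hca ▸ ha) hzM hcM)
  have h₁ := h.not_opposite_of_near hwK hyK
  have h₂ := h.not_opposite_of_near hwK' hyK'
  by_cases hnear : Γ.Near w M
  · obtain hn | ⟨c, hc, hwc⟩ := hnear
    · exact hw hn
    · exact hne ((key hyM hyK hK hwK hc hwc).trans (key hyM' hyK' hK' hwK' hc hwc).symm)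
  · exact hne (h.eq_of_special_of_far hnear hyM hyM'
      (special_of_far_of_not_opposite hnear hyM h₁)
      (special_of_far_of_not_opposite hnear hyM' h₂))

end IsHex

end GenHexagon

namespace GenHexagon

variable {Γ : GenHexagon}

/-- A set `S` of `s + 1` points of a hexagon of order `(s, t)`, with `s, t > 1`, such that no
point is opposite every member of `S`. -/
structure IsBlocking (Γ : GenHexagon) (s t : ℕ) (S : Set Γ.Point) : Prop where
  hex : Γ.IsHex
  order : Γ.HasOrder s t
  one_lt_s : 1 < s
  one_lt_t : 1 < t
  encard_eq : S.encard = s + 1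
  block : ∀ y, ∃ x ∈ S, ¬ Γ.Opposite y x

theorem HasOrder.finite_pts {s t : ℕ} (h : Γ.HasOrder s t) (L : Γ.Line) : (Γ.pts L).Finite :=
  Set.finite_of_encard_eq_coe (k := s + 1) (by exact_mod_cast h.1 L)

theorem HasOrder.ncard_pts {s t : ℕ} (h : Γ.HasOrder s t) (L : Γ.Line) :
    (Γ.pts L).ncard = s + 1 := by
  have := h.1 L
  rw [← (h.finite_pts L).cast_ncard_eq] at this
  exact_mod_cast this

theorem HasOrder.finite_lines {s t : ℕ} (h : Γ.HasOrder s t) (x : Γ.Point) :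
    {L | x ∈ Γ.pts L}.Finite :=
  Set.finite_of_encard_eq_coe (k := t + 1) (by exact_mod_cast h.2 x)

theorem HasOrder.ncard_lines {s t : ℕ} (h : Γ.HasOrder s t) (x : Γ.Point) :
    {L | x ∈ Γ.pts L}.ncard = t + 1 := by
  have := h.2 x
  rw [← (h.finite_lines x).cast_ncard_eq] at this
  exact_mod_cast this

namespace IsBlocking

variable {s t : ℕ} {S : Set Γ.Point}

theorem finite (h : Γ.IsBlocking s t S) : S.Finite :=
  Set.finite_of_encard_eq_coe (k := s + 1) (by exact_mod_cast h.encard_eq)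

theorem ncard_eq (h : Γ.IsBlocking s t S) : S.ncard = s + 1 := by
  have := h.encard_eq
  rw [← h.finite.cast_ncard_eq] at this
  exact_mod_cast this

theorem nontrivial (h : Γ.IsBlocking s t S) : S.Nontrivial :=
  (Set.one_lt_ncard_iff_nontrivial_and_finite.1 (by
    rw [h.ncard_eq]
    have := h.one_lt_s
    omega)).1

theorem exists_line_ne_ne (h : Γ.IsBlocking s t S) (x : Γ.Point) (L M : Γ.Line) :
    ∃ K, x ∈ Γ.pts K ∧ K ≠ L ∧ K ≠ M := by
  obtain ⟨K, hK, hK'⟩ := Set.exists_mem_notMem_of_ncard_lt_ncard (s := {L, M})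
    (t := {L | x ∈ Γ.pts L}) (by
      have := Set.ncard_insert_le L {M}
      rw [Set.ncard_singleton] at this
      rw [h.order.ncard_lines]
      have := h.one_lt_t
      omega)
  simp at hK'
  exact ⟨K, hK, hK'⟩

theorem exists_line_ne (h : Γ.IsBlocking s t S) (x : Γ.Point) (L : Γ.Line) :
    ∃ K, x ∈ Γ.pts K ∧ K ≠ L :=
  (h.exists_line_ne_ne x L L).imp fun _ h => ⟨h.1, h.2.1⟩

theorem exists_point_ne_ne (h : Γ.IsBlocking s t S) (L : Γ.Line) (x y : Γ.Point) :
    ∃ z ∈ Γ.pts L, z ≠ x ∧ z ≠ y := by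
  obtain ⟨K, hK, hK'⟩ := Set.exists_mem_notMem_of_ncard_lt_ncard (s := {x, y})
    (t := Γ.pts L) (by
      have := Set.ncard_insert_le x {y}
      rw [Set.ncard_singleton] at this
      rw [h.order.ncard_pts]
      have := h.one_lt_s
      omega)
  simp at hK'
  exact ⟨K, hK, hK'⟩

/-- If a point is opposite neither of two members of `S`, then every line through it is near
some member of `S`. -/
theorem exists_near (h : Γ.IsBlocking s t S) {x₁ x₂ y : Γ.Point} {K : Γ.Line} (h₁ : x₁ ∈ S)
    (h₂ : x₂ ∈ S) (hne : x₁ ≠ x₂) (hy₁ : ¬ Γ.Opposite x₁ y) (hy₂ : ¬ Γ.Opposite x₂ y)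
    (hyK : y ∈ Γ.pts K) : ∃ x ∈ S, Γ.Near x K := by
  by_contra hfar
  push Not at hfar
  choose f hfS hf using h.block
  have hf' : ∀ z ∈ Γ.pts K, Γ.Special (f z) z := fun z hz =>
    IsHex.special_of_far_of_not_opposite (hfar _ (hfS z)) hz fun ho => hf z ho.symm
  have hinj : Set.InjOn f (Γ.pts K) := by
    intro z hz z' hz' he
    exact h.hex.eq_of_special_of_far (hfar _ (hfS z)) hz hz' (hf' z hz) (he ▸ hf' z' hz')
  have himg : f '' Γ.pts K = S :=
    Set.eq_of_subset_of_ncard_le (by rintro _ ⟨z, -, rfl⟩; exact hfS z)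
      (by rw [hinj.ncard_image, h.order.ncard_pts, h.ncard_eq]) h.finite
  have key : ∀ x ∈ S, ¬ Γ.Opposite x y → f y = x := by
    intro x hx hxy
    obtain ⟨z, hz, rfl⟩ := himg.symm ▸ hx
    rw [h.hex.eq_of_special_of_far (hfar _ hx) hz hyK (hf' z hz)
      (IsHex.special_of_far_of_not_opposite (hfar _ hx) hyK hxy)]
  exact hne ((key _ h₁ hy₁).symm.trans (key _ h₂ hy₂))

/-- A point that is neither in `S` nor collinear to a member of `S`, and that is opposite
neither of two members of `S`, is special to at least `t + 1` members of `S`. -/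
theorem le_ncard_special (h : Γ.IsBlocking s t S) {x₁ x₂ y : Γ.Point} (h₁ : x₁ ∈ S)
    (h₂ : x₂ ∈ S) (hne : x₁ ≠ x₂) (hy₁ : ¬ Γ.Opposite x₁ y) (hy₂ : ¬ Γ.Opposite x₂ y)
    (hyS : y ∉ S) (hyc : ∀ x ∈ S, ¬ Γ.Collinear x y) :
    t + 1 ≤ {x ∈ S | Γ.Special y x}.ncard := by
  have hex : ∀ K, ∃ x, y ∈ Γ.pts K → x ∈ S ∧ Γ.Near x K := by
    intro K
    by_cases hyK : y ∈ Γ.pts K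
    · obtain ⟨x, hx⟩ := h.exists_near h₁ h₂ hne hy₁ hy₂ hyK
      exact ⟨x, fun _ => hx⟩
    · exact ⟨y, fun hK => absurd hK hyK⟩
  choose f hf using hex
  have hsp : ∀ K, y ∈ Γ.pts K → Γ.Special (f K) y := by
    intro K hK
    rcases not_opposite_iff.1 (h.hex.not_opposite_of_near (hf K hK).2 hK) with he | hc | hsp
    · exact absurd (he ▸ (hf K hK).1) hyS
    · exact absurd hc (hyc _ (hf K hK).1)
    · exact hsp
  rw [← h.order.ncard_lines y]
  refine Set.ncard_le_ncard_of_injOn f (fun K hK => ⟨(hf K hK).1, (hsp K hK).symm⟩) ?_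
    (h.finite.subset (Set.sep_subset _ _))
  intro K hK K' hK' he
  obtain hm | ⟨a, ha, hca⟩ := (hf K hK).2
  · exact absurd hm ((hsp K hK).not_mem hK)
  obtain hm | ⟨a', ha', hca'⟩ := (hf K' hK').2
  · exact absurd hm ((hsp K' hK').not_mem hK')
  have hya : y ≠ a := fun e => (hsp K hK).2.1 (e ▸ hca)
  have hya' : y ≠ a' := fun e => (hsp K' hK').2.1 (e ▸ hca')
  have haa' : a = a' := h.hex.no_quadrangle (hsp K hK).1 (hsp K hK).2.1 hca ⟨hya, K, hK, ha⟩
    (he ▸ hca') ⟨hya', K', hK', ha'⟩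
  exact h.hex.line_unique hya hK ha hK' (haa' ▸ ha')

/-- Let `L` be a line disjoint from `S`, near two members `x`, `w` of `S`. A line meeting `L`
in a point not collinear to `x` or `w` is near a member of `S` other than `x` and `w`. -/
theorem exists_near_ne_ne (h : Γ.IsBlocking s t S) {L K : Γ.Line} {x w a b y : Γ.Point}
    (hL : ∀ z ∈ S, z ∉ Γ.pts L) (hx : x ∈ S) (hw : w ∈ S) (hxw : x ≠ w) (ha : a ∈ Γ.pts L)
    (hb : b ∈ Γ.pts L) (hxa : Γ.Collinear x a) (hwb : Γ.Collinear w b) (hy : y ∈ Γ.pts L)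
    (hya : y ≠ a) (hyb : y ≠ b) (hyK : y ∈ Γ.pts K) (hK : K ≠ L) :
    ∃ z ∈ S \ {x, w}, Γ.Near z K := by
  obtain ⟨z, hz, hzK⟩ := h.exists_near hx hw hxw
    (h.hex.not_opposite_of_near (Or.inr ⟨a, ha, hxa⟩) hy)
    (h.hex.not_opposite_of_near (Or.inr ⟨b, hb, hwb⟩) hy) hyK
  have key : ∀ v c, v ∈ S → c ∈ Γ.pts L → Γ.Collinear v c → y ≠ c → z ≠ v := by
    rintro v c hv hc hvc hyc rfl
    obtain ⟨-, C, hvC, hcC⟩ := hvc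
    exact hyc (h.hex.eq_of_near_of_near (hL z hz) hy hc hyK hcC hK
      (fun e => hL z hz (e ▸ hvC)) hzK (Or.inl hvC))
  refine ⟨z, ⟨hz, ?_⟩, hzK⟩
  simp [key x a hx ha hxa hya, key w b hw hb hwb hyb]

/-- Two members of `S` collinear to a common point of a line force the line to meet `S`. -/
theorem exists_mem_of_collinear_of_collinear (h : Γ.IsBlocking s t S) {L : Γ.Line}
    {x w a : Γ.Point} (hx : x ∈ S) (hw : w ∈ S) (hxw : x ≠ w) (ha : a ∈ Γ.pts L)
    (hxa : Γ.Collinear x a) (hwa : Γ.Collinear w a) : ∃ z ∈ S, z ∈ Γ.pts L := by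
  by_contra hL
  push Not at hL
  choose K hyK hK using fun y => h.exists_line_ne y L
  have hex : ∀ y, ∃ z, y ∈ Γ.pts L \ {a} → z ∈ S \ {x, w} ∧ Γ.Near z (K y) := by
    intro y
    by_cases hy : y ∈ Γ.pts L \ {a}
    · obtain ⟨z, hz⟩ := h.exists_near_ne_ne hL hx hw hxw ha ha hxa hwa hy.1 hy.2 hy.2 (hyK y)
        (hK y)
      exact ⟨z, fun _ => hz⟩
    · exact ⟨y, fun hy' => absurd hy' hy⟩
  choose f hf using hex
  have hle := Set.ncard_le_ncard_of_injOn (s := Γ.pts L \ {a}) (t := S \ {x, w}) f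
    (fun y hy => (hf y hy).1) (by
      intro y hy y' hy' he
      exact h.hex.eq_of_near_of_near (hL _ (hf y hy).1.1) hy.1 hy'.1 (hyK y) (hyK y') (hK y)
        (hK y') (hf y hy).2 (he ▸ (hf y' hy').2)) (h.finite.subset Set.sdiff_subset)
  rw [Set.ncard_sdiff_singleton_of_mem ha, Set.ncard_sdiff (by
    rintro v (rfl | rfl) <;> assumption), Set.ncard_pair hxw, h.ncard_eq,
    h.order.ncard_pts] at hle
  have := h.one_lt_s
  omega

/-- If a line disjoint from `S` is near two members of `S`, it is near all of them. -/
theorem exists_collinear_of_near_of_near (h : Γ.IsBlocking s t S) {L : Γ.Line}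
    {x w a b : Γ.Point} (hL : ∀ z ∈ S, z ∉ Γ.pts L) (hx : x ∈ S) (hw : w ∈ S) (hxw : x ≠ w)
    (ha : a ∈ Γ.pts L) (hb : b ∈ Γ.pts L) (hxa : Γ.Collinear x a) (hwb : Γ.Collinear w b)
    {v : Γ.Point} (hv : v ∈ S) : ∃ c ∈ Γ.pts L, Γ.Collinear v c := by
  have hab : a ≠ b := by
    rintro rfl
    obtain ⟨z, hz, hzL⟩ := h.exists_mem_of_collinear_of_collinear hx hw hxw ha hxa hwb
    exact hL z hz hzL
  choose K hyK hK using fun y => h.exists_line_ne y L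
  have hex : ∀ y, ∃ z, y ∈ Γ.pts L \ {a, b} → z ∈ S \ {x, w} ∧ Γ.Near z (K y) := by
    intro y
    by_cases hy : y ∈ Γ.pts L \ {a, b}
    · have hy2 := hy.2
      simp only [Set.mem_insert_iff, Set.mem_singleton_iff, not_or] at hy2
      obtain ⟨z, hz⟩ := h.exists_near_ne_ne hL hx hw hxw ha hb hxa hwb hy.1 hy2.1 hy2.2 (hyK y)
        (hK y)
      exact ⟨z, fun _ => hz⟩
    · exact ⟨y, fun hy' => absurd hy' hy⟩
  choose f hf using hex
  have hinj : Set.InjOn f (Γ.pts L \ {a, b}) := by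
    intro y hy y' hy' he
    exact h.hex.eq_of_near_of_near (hL _ (hf y hy).1.1) hy.1 hy'.1 (hyK y) (hyK y') (hK y)
      (hK y') (hf y hy).2 (he ▸ (hf y' hy').2)
  have himg : f '' (Γ.pts L \ {a, b}) = S \ {x, w} := by
    refine Set.eq_of_subset_of_ncard_le (by rintro _ ⟨z, hz, rfl⟩; exact (hf z hz).1) ?_
      (h.finite.subset Set.sdiff_subset)
    rw [hinj.ncard_image, Set.ncard_sdiff (by rintro v (rfl | rfl) <;> assumption),
      Set.ncard_sdiff (by rintro v (rfl | rfl) <;> assumption), Set.ncard_pair hxw,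
      Set.ncard_pair hab, h.ncard_eq, h.order.ncard_pts]
  by_cases hvx : v = x
  · exact ⟨a, ha, hvx ▸ hxa⟩
  by_cases hvw : v = w
  · exact ⟨b, hb, hvw ▸ hwb⟩
  obtain ⟨y, hy, rfl⟩ : v ∈ f '' (Γ.pts L \ {a, b}) := by
    rw [himg]
    simp [hv, hvx, hvw]
  refine ⟨y, hy.1, ?_⟩
  have hy2 := hy.2
  simp only [Set.mem_insert_iff, Set.mem_singleton_iff, not_or] at hy2
  obtain ⟨K', hyK', hK'L, hK'⟩ := h.exists_line_ne_ne y L (K y)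
  obtain ⟨z, hz, hzK'⟩ := h.exists_near_ne_ne hL hx hw hxw ha hb hxa hwb hy.1 hy2.1 hy2.2 hyK'
    hK'L
  obtain ⟨y', hy', rfl⟩ := himg.symm ▸ hz
  obtain rfl : y = y' := h.hex.eq_of_near_of_near (hL _ hz.1) hy.1 hy'.1 hyK' (hyK y') hK'L
    (hK y') hzK' (hf y' hy').2
  have hne : f y ≠ y := fun e => hL _ hv (e.symm ▸ hy.1)
  obtain hm | ⟨c, hc, hfc⟩ := (hf y hy).2
  · exact ⟨hne, K y, hm, hyK y⟩
  obtain hm | ⟨c', hc', hfc'⟩ := hzK'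
  · exact ⟨hne, K', hm, hyK'⟩
  by_contra hnc
  have hyc : y ≠ c := fun e => hnc (e ▸ hfc)
  have hyc' : y ≠ c' := fun e => hnc (e ▸ hfc')
  have hcc' := h.hex.no_quadrangle hne hnc hfc ⟨hyc, K y, hyK y, hc⟩ hfc' ⟨hyc', K', hyK', hc'⟩
  exact hK' (h.hex.line_unique hyc hyK' (hcc' ▸ hc') (hyK y) hc)

/-- If two members of `S` are collinear, then `S` is a line. -/
theorem eq_pts_of_collinear (h : Γ.IsBlocking s t S) {L : Γ.Line} {x₁ x₂ : Γ.Point}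
    (h₁ : x₁ ∈ S) (h₂ : x₂ ∈ S) (hne : x₁ ≠ x₂) (hL₁ : x₁ ∈ Γ.pts L) (hL₂ : x₂ ∈ Γ.pts L) :
    S = Γ.pts L := by
  have hfin := h.order.finite_pts L
  by_contra hSL
  have hnsub : ¬ Γ.pts L ⊆ S := fun hsub =>
    hSL (Set.eq_of_subset_of_ncard_le hsub (by rw [h.ncard_eq, h.order.ncard_pts])
      h.finite).symm
  obtain ⟨z₀, hz₀, hz₀S⟩ := Set.not_subset.1 hnsub
  have hmeet : ∀ z ∈ Γ.pts L, z ∉ S → ∀ M, z ∈ Γ.pts M → ∃ u ∈ S, u ∈ Γ.pts M :=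
    fun z hz hzS M hzM => h.exists_mem_of_collinear_of_collinear h₁ h₂ hne hzM
      ⟨fun e => hzS (e ▸ h₁), L, hL₁, hz⟩ ⟨fun e => hzS (e ▸ h₂), L, hL₂, hz⟩
  choose M hzM hML using fun z => h.exists_line_ne z L
  have hex : ∀ z, ∃ u, z ∈ Γ.pts L \ S → u ∈ S ∧ u ∈ Γ.pts (M z) := by
    intro z
    by_cases hz : z ∈ Γ.pts L \ S
    · obtain ⟨u, hu⟩ := hmeet z hz.1 hz.2 (M z) (hzM z)
      exact ⟨u, fun _ => hu⟩
    · exact ⟨z, fun hz' => absurd hz' hz⟩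
  choose g hg using hex
  have hoff : ∀ {z u N}, z ∈ Γ.pts L → z ∉ S → u ∈ S → u ∈ Γ.pts N → z ∈ Γ.pts N → N ≠ L →
      u ∉ Γ.pts L := fun hz hzS hu huN hzN hN huL =>
    hN (h.hex.line_unique (ne_of_mem_of_not_mem hu hzS) huN hzN huL hz)
  have hinj : Set.InjOn g (Γ.pts L \ S) := by
    intro z hz z' hz' he
    by_contra hzz
    refine hoff hz.1 hz.2 (hg z hz).1 (hg z hz).2 (hzM z) (hML z)
      (h.hex.no_triangle hzz hz.1 hz'.1 ?_ ?_)
    · exact ⟨fun e => hz.2 (e ▸ (hg z hz).1), M z, (hg z hz).2, hzM z⟩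
    · rw [he]
      exact ⟨fun e => hz'.2 (e ▸ (hg z' hz').1), M z', (hg z' hz').2, hzM z'⟩
  have himg : g '' (Γ.pts L \ S) = S \ Γ.pts L := by
    refine Set.eq_of_subset_of_ncard_le ?_ ?_ (h.finite.subset Set.sdiff_subset)
    · rintro _ ⟨z, hz, rfl⟩
      exact ⟨(hg z hz).1, hoff hz.1 hz.2 (hg z hz).1 (hg z hz).2 (hzM z) (hML z)⟩
    · rw [hinj.ncard_image]
      exact ((Set.ncard_eq_ncard_iff_ncard_sdiff_eq_ncard_sdiff h.finite hfin).1
        (by rw [h.ncard_eq, h.order.ncard_pts])).le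
  obtain ⟨N, hzN, hNL, hNM⟩ := h.exists_line_ne_ne z₀ L (M z₀)
  obtain ⟨u, hu, huN⟩ := hmeet z₀ hz₀ hz₀S N hzN
  have huL := hoff hz₀ hz₀S hu huN hzN hNL
  obtain ⟨z, hz, rfl⟩ : u ∈ g '' (Γ.pts L \ S) := by
    rw [himg]
    exact ⟨hu, huL⟩
  have hgz₀ : g z ≠ z₀ := fun e => hz₀S (e ▸ hu)
  by_cases hzz : z = z₀
  · subst hzz
    exact hNM (h.hex.line_unique hgz₀ huN hzN (hg z hz).2 (hzM z))
  · exact huL (h.hex.no_triangle hzz hz.1 hz₀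
      ⟨(ne_of_mem_of_not_mem hz.1 huL).symm, M z, (hg z hz).2, hzM z⟩ ⟨hgz₀, N, huN, hzN⟩)

end IsBlocking

end GenHexagon

namespace GenHexagon

variable {Γ : GenHexagon}

theorem not_opposite_of_collinear_of_collinear {x y z : Γ.Point} (hxy : Γ.Collinear x y)
    (hyz : Γ.Collinear y z) : ¬ Γ.Opposite x z :=
  fun ho => ho.2.2 ⟨ho.1, ho.2.1, y, hxy, hyz.symm⟩

theorem IsHex.closeTo (h : Γ.IsHex) {x a : Γ.Point} {L : Γ.Line} (hx : x ∉ Γ.pts L)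
    (ha : a ∈ Γ.pts L) (hxa : Γ.Collinear x a) : Γ.CloseTo x L := by
  refine ⟨a, ⟨ha, hxa⟩, fun b hb => ?_⟩
  by_contra hba
  exact hx (h.no_triangle hba hb.1 ha hb.2 hxa)

theorem OppLines.not_near {L M : Γ.Line} (hLM : Γ.OppLines L M) {x : Γ.Point}
    (hx : x ∈ Γ.pts L) : ¬ Γ.Near x M := by
  rintro (hm | ⟨a, ha, hxa⟩)
  · exact hLM.1 x hx hm
  · exact hLM.2 x hx a ha hxa

/-- If `a₁`, `x`, `a₂` is a path in the collinearity graph joining special points, then lines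
through `a₁` and `a₂` that do not contain `x` are opposite. -/
theorem IsHex.oppLines_of_path (h : Γ.IsHex) {a₁ a₂ x : Γ.Point} {L₁ L₂ : Γ.Line}
    (haa : Γ.Special a₁ a₂) (hcol₁ : Γ.Collinear a₁ x) (hcol₂ : Γ.Collinear a₂ x)
    (haL₁ : a₁ ∈ Γ.pts L₁) (haL₂ : a₂ ∈ Γ.pts L₂) (hx₁ : x ∉ Γ.pts L₁) (hx₂ : x ∉ Γ.pts L₂)
    (hex₁ : ∃ v ∈ Γ.pts L₁, v ≠ a₁) (hex₂ : ∃ v ∈ Γ.pts L₂, v ≠ a₂) : Γ.OppLines L₁ L₂ := by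
  have hopp₁ : ∀ v ∈ Γ.pts L₂, v ≠ a₂ → Γ.Opposite a₁ v := fun v hv hva =>
    h.opposite_of_path haa (h.special_of_collinear hx₂ haL₂ hv hva hcol₂.symm) hcol₁
      hcol₂.symm ⟨hva.symm, L₂, haL₂, hv⟩
  have hopp₂ : ∀ v ∈ Γ.pts L₁, v ≠ a₁ → Γ.Opposite a₂ v := fun v hv hva =>
    h.opposite_of_path haa.symm (h.special_of_collinear hx₁ haL₁ hv hva hcol₁.symm)
      hcol₂ hcol₁.symm ⟨hva.symm, L₁, haL₁, hv⟩
  have hfar₁ : ¬ Γ.Near a₁ L₂ := by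
    obtain ⟨v, hv, hva⟩ := hex₂
    exact h.not_near_of_opposite (hopp₁ v hv hva) hv
  have hfar₂ : ¬ Γ.Near a₂ L₁ := by
    obtain ⟨v, hv, hva⟩ := hex₁
    exact h.not_near_of_opposite (hopp₂ v hv hva) hv
  refine ⟨fun u hu hu' => ?_, fun u hu v hv huv => ?_⟩
  · have hua₁ : u ≠ a₁ := fun e => hfar₁ (Or.inl (e ▸ hu'))
    have hua₂ : u ≠ a₂ := fun e => hfar₂ (Or.inl (e ▸ hu))
    exact (hopp₁ u hu' hua₂).2.1 ⟨hua₁.symm, L₁, haL₁, hu⟩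
  · have hua₁ : u ≠ a₁ := fun e => hfar₁ (Or.inr ⟨v, hv, e ▸ huv⟩)
    have hva₂ : v ≠ a₂ := fun e => hfar₂ (Or.inr ⟨u, hu, e ▸ huv.symm⟩)
    exact not_opposite_of_collinear_of_collinear ⟨hua₁.symm, L₁, haL₁, hu⟩ huv
      (hopp₁ v hv hva₂)

/-- A distance-3 trace has at most as many points as a line. -/
theorem IsHex.trace3_finite_and_ncard_le (h : Γ.IsHex) {L M : Γ.Line} (hLM : Γ.OppLines L M)
    (hfin : (Γ.pts L).Finite) :
    (Γ.trace3 L M).Finite ∧ (Γ.trace3 L M).ncard ≤ (Γ.pts L).ncard := by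
  have hex : ∀ x, ∃ a, x ∈ Γ.trace3 L M → a ∈ Γ.pts L ∧ Γ.Collinear x a := by
    intro x
    by_cases hx : x ∈ Γ.trace3 L M
    · obtain ⟨a, ha, -⟩ := hx.1
      exact ⟨a, fun _ => ha⟩
    · exact ⟨x, fun hx' => absurd hx' hx⟩
  choose f hf using hex
  have hmaps : Set.MapsTo f (Γ.trace3 L M) (Γ.pts L) := fun x hx => (hf x hx).1
  have hinj : Set.InjOn f (Γ.trace3 L M) := by
    intro x hx x' hx' he
    obtain ⟨b, ⟨hb, hxb⟩, -⟩ := hx.2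
    obtain ⟨b', ⟨hb', hxb'⟩, -⟩ := hx'.2
    have hfx := hf x hx
    have hfx' := he.symm ▸ hf x' hx'
    have hfar := hLM.not_near hfx.1
    have hsp := IsHex.special_of_far_of_not_opposite hfar hb
      (not_opposite_of_collinear_of_collinear hfx.2.symm hxb)
    have hsp' := IsHex.special_of_far_of_not_opposite hfar hb'
      (not_opposite_of_collinear_of_collinear hfx'.2.symm hxb')
    obtain rfl := h.eq_of_special_of_far hfar hb hb' hsp hsp'
    exact h.no_quadrangle hsp.1 hsp.2.1 hfx.2.symm hxb.symm hfx'.2.symm hxb'.symm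
  exact ⟨Set.Finite.of_injOn hmaps hinj hfin, Set.ncard_le_ncard_of_injOn f hmaps hinj hfin⟩

namespace IsBlocking

variable {s t : ℕ} {S : Set Γ.Point}

theorem eq_trace3_of_subset (h : Γ.IsBlocking s t S) {L M : Γ.Line} (hLM : Γ.OppLines L M)
    (hsub : S ⊆ Γ.trace3 L M) : S = Γ.trace3 L M := by
  obtain ⟨hfin, hcard⟩ := h.hex.trace3_finite_and_ncard_le hLM (h.order.finite_pts L)
  exact Set.eq_of_subset_of_ncard_le hsub (by rwa [h.ncard_eq, ← h.order.ncard_pts L]) hfin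

/-- If `S` consists of pairwise opposite points, a line near two members of `S` is close to
all members of `S`. -/
theorem forall_closeTo (h : Γ.IsBlocking s t S) (hopp : S.Pairwise Γ.Opposite) {L : Γ.Line}
    {x w a b : Γ.Point} (hx : x ∈ S) (hw : w ∈ S) (hxw : x ≠ w) (ha : a ∈ Γ.pts L)
    (hb : b ∈ Γ.pts L) (hxa : Γ.Collinear x a) (hwb : Γ.Collinear w b) {v : Γ.Point}
    (hv : v ∈ S) : v ∉ Γ.pts L ∧ Γ.CloseTo v L := by
  have hL : ∀ z ∈ S, z ∉ Γ.pts L := by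
    intro z hz hzL
    have key : ∀ {u c}, u ∈ S → c ∈ Γ.pts L → Γ.Collinear u c → u = z := by
      intro u c hu hc huc
      by_contra hne
      exact h.hex.not_opposite_of_near (Or.inr ⟨c, hc, huc⟩) hzL (hopp hu hz hne)
    exact hxw ((key hx ha hxa).trans (key hw hb hwb).symm)
  obtain ⟨c, hc, hvc⟩ := h.exists_collinear_of_near_of_near hL hx hw hxw ha hb hxa hwb hv
  exact ⟨hL v hv, h.hex.closeTo (hL v hv) hc hvc⟩

/-- If `S` consists of pairwise opposite points, it is a regular distance-3 trace and
`t ≤ s`. -/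
theorem regular_trace_of_pairwise_opposite (h : Γ.IsBlocking s t S)
    (hopp : S.Pairwise Γ.Opposite) :
    (∃ L M, Γ.OppLines L M ∧ S = Γ.trace3 L M ∧ Γ.RegularTrace3 L M) ∧ t ≤ s := by
  obtain ⟨x₁, h₁, x₂, h₂, hne⟩ := h.nontrivial
  have h₁₂ := hopp h₁ h₂ hne
  obtain ⟨A₁, hA₁⟩ : {L | x₁ ∈ Γ.pts L}.Nonempty := by
    rw [← Set.ncard_pos (h.order.finite_lines x₁), h.order.ncard_lines]
    omega
  have hA₁ : x₁ ∈ Γ.pts A₁ := hA₁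
  obtain ⟨A₂, hA₂, hA⟩ := h.exists_line_ne x₁ A₁
  have hproj : ∀ {A}, x₁ ∈ Γ.pts A → ∃ a L, a ∈ Γ.pts A ∧ a ∈ Γ.pts L ∧ Γ.Special x₂ a ∧
      a ≠ x₁ ∧ x₁ ∉ Γ.pts L ∧ ∀ v ∈ S, v ∉ Γ.pts L ∧ Γ.CloseTo v L := by
    intro A hA
    have hfar := h.hex.not_near_of_opposite h₁₂.symm hA
    obtain ⟨a, ha, hsp⟩ := h.hex.exists_special_of_far hfar
    obtain ⟨b, hxb, hab, L, haL, hbL⟩ := hsp.2.2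
    have hax : a ≠ x₁ := fun e => h₁₂.symm.2.2 (e ▸ hsp)
    have hall : ∀ v ∈ S, v ∉ Γ.pts L ∧ Γ.CloseTo v L := fun v hv =>
      h.forall_closeTo hopp h₁ h₂ hne haL hbL ⟨hax.symm, A, hA, ha⟩ hxb hv
    exact ⟨a, L, ha, haL, hsp, hax, (hall x₁ h₁).1, hall⟩
  obtain ⟨a₁, L₁, ha₁, haL₁, hsp₁, hax₁, hx₁, hall₁⟩ := hproj hA₁
  obtain ⟨a₂, L₂, ha₂, haL₂, hsp₂, hax₂, hx₂, hall₂⟩ := hproj hA₂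
  have haa : Γ.Special a₁ a₂ := h.hex.special_of_concurrent hA.symm hA₁ hA₂ ha₁ ha₂ hax₁ hax₂
  have hcol₁ : Γ.Collinear a₁ x₁ := ⟨hax₁, A₁, ha₁, hA₁⟩
  have hcol₂ : Γ.Collinear a₂ x₁ := ⟨hax₂, A₂, ha₂, hA₂⟩
  have hLL : Γ.OppLines L₁ L₂ := by
    obtain ⟨v₁, hv₁, hva₁, -⟩ := h.exists_point_ne_ne L₁ a₁ a₁
    obtain ⟨v₂, hv₂, hva₂, -⟩ := h.exists_point_ne_ne L₂ a₂ a₂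
    exact h.hex.oppLines_of_path haa hcol₁ hcol₂ haL₁ haL₂ hx₁ hx₂ ⟨v₁, hv₁, hva₁⟩
      ⟨v₂, hv₂, hva₂⟩
  have hS : S = Γ.trace3 L₁ L₂ :=
    h.eq_trace3_of_subset hLL fun v hv => ⟨(hall₁ v hv).2, (hall₂ v hv).2⟩
  refine ⟨⟨L₁, L₂, hLL, hS, ?_⟩, ?_⟩
  · intro N hN hnt
    rw [← hS] at hnt ⊢
    obtain ⟨x, ⟨hxN, hx⟩, w, ⟨hwN, hw⟩, hxw⟩ := hnt
    obtain ⟨a, ⟨ha, hxa⟩, -⟩ := hxN.1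
    obtain ⟨b, ⟨hb, hwb⟩, -⟩ := hwN.1
    exact (h.eq_trace3_of_subset hN fun v hv =>
      ⟨(h.forall_closeTo hopp hx hw hxw ha hb hxa hwb hv).2, (hall₂ v hv).2⟩).symm
  · obtain ⟨a, ha, hax, haa₁⟩ := h.exists_point_ne_ne A₁ x₁ a₁
    obtain ⟨Y, haY, hYA⟩ := h.exists_line_ne a A₁
    have hopp_a : ∀ z ∈ S, z ≠ x₁ → Γ.Opposite z a := by
      intro z hz hzx
      obtain ⟨hzL, c, ⟨hc, hzc⟩, -⟩ := hall₁ z hz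
      have hca : a₁ ≠ c := by
        rintro rfl
        exact not_opposite_of_collinear_of_collinear hzc hcol₁ (hopp hz h₁ hzx)
      have hsp := h.hex.special_of_collinear hzL hc haL₁ hca hzc
      exact h.hex.opposite_of_far (h.hex.not_near_of_opposite (hopp hz h₁ hzx) hA₁) ha₁ ha hsp
        haa₁
    obtain ⟨y, hy, hspy⟩ := h.hex.exists_special_of_far
      (h.hex.not_near_of_opposite (hopp_a x₂ h₂ hne.symm) haY)
    have hya : y ≠ a := fun e => (hopp_a x₂ h₂ hne.symm).2.2 (e ▸ hspy)
    have hspx : Γ.Special y x₁ := h.hex.special_of_concurrent hYA haY ha hy hA₁ hya hax.symm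
    have hyS : y ∉ S := fun hyS => hspx.not_opposite (hopp hyS h₁ hspx.1)
    have hle := h.le_ncard_special h₁ h₂ hne hspx.symm.not_opposite hspy.not_opposite hyS (by
      intro z hz hzy
      by_cases hzx : z = x₁
      · exact hspx.2.1 (hzx ▸ hzy.symm)
      · exact not_opposite_of_collinear_of_collinear hzy ⟨hya, Y, hy, haY⟩ (hopp_a z hz hzx))
    have hle' := Set.ncard_le_ncard (Set.sep_subset S fun x => Γ.Special y x) h.finite
    rw [h.ncard_eq] at hle'
    omega

/-- If no two members of `S` are collinear and all of them are collinear to a common point,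
then `S` is a hyperbolic line and `s = t`. -/
theorem hyperbolic_of_forall_collinear (h : Γ.IsBlocking s t S)
    (hnc : ∀ x ∈ S, ∀ y ∈ S, ¬ Γ.Collinear x y) {p : Γ.Point}
    (hp : ∀ x ∈ S, Γ.Collinear x p) : Γ.IsHyperbolicLine S ∧ s = t := by
  obtain ⟨x₁, h₁, x₂, h₂, hne⟩ := h.nontrivial
  have hmeet : ∀ D, p ∈ Γ.pts D → ∃ x ∈ S, x ∈ Γ.pts D := fun D hD =>
    h.exists_mem_of_collinear_of_collinear h₁ h₂ hne hD (hp _ h₁) (hp _ h₂)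
  have hst : s = t := by
    have hex : ∀ D, ∃ x, p ∈ Γ.pts D → x ∈ S ∧ x ∈ Γ.pts D := by
      intro D
      by_cases hD : p ∈ Γ.pts D
      · obtain ⟨x, hx⟩ := hmeet D hD
        exact ⟨x, fun _ => hx⟩
      · exact ⟨p, fun hD' => absurd hD' hD⟩
    choose f hf using hex
    have hle₁ := Set.ncard_le_ncard_of_injOn (s := {D | p ∈ Γ.pts D}) (t := S) f
      (fun D hD => (hf D hD).1) (by
        intro D hD D' hD' he
        exact h.hex.line_unique (hp _ (hf D hD).1).1 (hf D hD).2 hD (he ▸ (hf D' hD').2) hD')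
      h.finite
    have hex' : ∀ x, ∃ D, x ∈ S → x ∈ Γ.pts D ∧ p ∈ Γ.pts D := by
      intro x
      by_cases hx : x ∈ S
      · obtain ⟨D, hD⟩ := (hp x hx).2
        exact ⟨D, fun _ => hD⟩
      · obtain ⟨D, -⟩ := (hp _ h₁).2
        exact ⟨D, fun hx' => absurd hx' hx⟩
    choose g hg using hex'
    have hle₂ := Set.ncard_le_ncard_of_injOn (s := S) (t := {D | p ∈ Γ.pts D}) g
      (fun x hx => (hg x hx).2) (by
        intro x hx x' hx' he
        by_contra hxx
        exact hnc x hx x' hx' ⟨hxx, g x, (hg x hx).1, he ▸ (hg x' hx').1⟩)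
      (h.order.finite_lines p)
    rw [h.ncard_eq, h.order.ncard_lines] at hle₁ hle₂
    omega
  refine ⟨⟨fun x hx y hy hxy => ⟨hxy, hnc x hx y hy, p, hp x hx, hp y hy⟩, p, hp, ?_⟩, hst⟩
  rintro q hqp ⟨y₁, ⟨hy₁, hq₁⟩, y₂, ⟨hy₂, hq₂⟩, hyne⟩
  have hle := h.le_ncard_special hy₁ hy₂ hyne hq₁.symm.not_opposite hq₂.symm.not_opposite
    (fun hq => (hp q hq).not_opposite hqp)
    (fun x hx hxq => not_opposite_of_collinear_of_collinear hxq.symm (hp x hx) hqp)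
  have hall : {x ∈ S | Γ.Special q x} = S :=
    Set.eq_of_subset_of_ncard_le (Set.sep_subset _ _) (by rw [h.ncard_eq, hst]; exact hle)
      h.finite
  have hsp : ∀ x ∈ S, Γ.Special q x := fun x hx => (hall.symm ▸ hx : x ∈ {x ∈ S | _}).2
  ext x
  refine ⟨fun ⟨hqx, hxp⟩ => ?_, fun hx => ⟨hsp x hx, hp x hx⟩⟩
  obtain ⟨-, D, hxD, hpD⟩ := hxp
  obtain ⟨x', hx', hxD'⟩ := hmeet D hpD
  rwa [h.hex.eq_of_special_of_far (h.hex.not_near_of_opposite hqp hpD) hxD hxD' hqx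
    (hsp x' hx')]

end IsBlocking

end GenHexagon

namespace GenHexagon

variable {Γ : GenHexagon}

/-- The points collinear to at least two members of `S`. -/
def centers (Γ : GenHexagon) (S : Set Γ.Point) : Set Γ.Point :=
  {r | ∃ x ∈ S, ∃ y ∈ S, x ≠ y ∧ Γ.Collinear x r ∧ Γ.Collinear y r}

namespace IsBlocking

variable {s t : ℕ} {S : Set Γ.Point}

theorem exists_mem_of_mem_centers (h : Γ.IsBlocking s t S) {r : Γ.Point} {D : Γ.Line}
    (hr : r ∈ Γ.centers S) (hrD : r ∈ Γ.pts D) : ∃ x ∈ S, x ∈ Γ.pts D := by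
  obtain ⟨x, hx, y, hy, hxy, hxr, hyr⟩ := hr
  exact h.exists_mem_of_collinear_of_collinear hx hy hxy hrD hxr hyr

end IsBlocking

/-- A blocking set no two members of which are collinear. -/
structure IsPartialBlocking (Γ : GenHexagon) (s t : ℕ) (S : Set Γ.Point) : Prop
    extends Γ.IsBlocking s t S where
  not_collinear : ∀ x ∈ S, ∀ y ∈ S, ¬ Γ.Collinear x y

namespace IsPartialBlocking

variable {s t : ℕ} {S : Set Γ.Point}

theorem not_mem_of_mem_centers (h : Γ.IsPartialBlocking s t S) {r : Γ.Point}
    (hr : r ∈ Γ.centers S) : r ∉ S := by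
  obtain ⟨x, hx, y, hy, hxy, hxr, hyr⟩ := hr
  exact fun hrS => h.not_collinear x hx r hrS hxr

theorem eq_of_mem (h : Γ.IsPartialBlocking s t S) {x y : Γ.Point} {L : Γ.Line} (hx : x ∈ S)
    (hy : y ∈ S) (hxL : x ∈ Γ.pts L) (hyL : y ∈ Γ.pts L) : x = y := by
  by_contra hxy
  exact h.not_collinear x hx y hy ⟨hxy, L, hxL, hyL⟩

/-- Every other line through a centre contains a member of `S` off a given line. -/
theorem exists_mem_not_mem (h : Γ.IsPartialBlocking s t S) {r : Γ.Point} {B D : Γ.Line}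
    (hr : r ∈ Γ.centers S) (hrB : r ∈ Γ.pts B) (hrD : r ∈ Γ.pts D) (hBD : B ≠ D) :
    ∃ x ∈ S, x ∈ Γ.pts B ∧ x ∉ Γ.pts D ∧ Γ.Collinear x r := by
  obtain ⟨x, hx, hxB⟩ := h.exists_mem_of_mem_centers hr hrB
  have hxr : x ≠ r := fun e => h.not_mem_of_mem_centers hr (e ▸ hx)
  exact ⟨x, hx, hxB, fun hxD => hBD (h.hex.line_unique hxr hxB hrB hxD hrD), hxr, B, hxB, hrB⟩

/-- A line near two members `x`, `w` of `S`, joined to `x` by a line containing a centre,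
meets `S`. -/
theorem exists_mem_of_center (h : Γ.IsPartialBlocking s t S) {L D : Γ.Line}
    {x w c d r : Γ.Point} (hx : x ∈ S) (hw : w ∈ S) (hxw : x ≠ w) (hc : c ∈ Γ.pts L)
    (hd : d ∈ Γ.pts L) (hxc : Γ.Collinear x c) (hwd : Γ.Collinear w d)
    (hcD : c ∈ Γ.pts D) (hrD : r ∈ Γ.pts D) (hr : r ∈ Γ.centers S) :
    ∃ z ∈ S, z ∈ Γ.pts L := by
  by_contra hL
  have hrL : r ∉ Γ.pts L := fun hrL => hL (h.exists_mem_of_mem_centers hr hrL)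
  push Not at hL
  have hrc : r ≠ c := fun e => hrL (e ▸ hc)
  obtain ⟨B, hrB, hBD⟩ := h.exists_line_ne r D
  obtain ⟨v, hv, hvB, hvD, hvr⟩ := h.exists_mem_not_mem hr hrB hrD hBD
  obtain ⟨d', hd', hvd'⟩ := h.exists_collinear_of_near_of_near hL hx hw hxw hc hd hxc hwd hv
  have hvc : ¬ Γ.Collinear v c := fun hvc => hvD (h.hex.no_triangle hrc hrD hcD hvr hvc)
  have hcd : c ≠ d' := fun e => hvc (e ▸ hvd')
  have := h.hex.no_quadrangle (ne_of_mem_of_not_mem hcD hvD).symm hvc hvr ⟨hrc.symm, D, hcD, hrD⟩ hvd'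
    ⟨hcd, L, hc, hd'⟩
  exact hrL (this ▸ hd')

/-- On a path from a member of `S` to a centre opposite it, the neighbour of the former is a
centre. -/
theorem mem_centers_of_path (h : Γ.IsPartialBlocking s t S) {w p u z : Γ.Point} (hw : w ∈ S)
    (hp : p ∈ Γ.centers S) (hwp : Γ.Opposite w p) (hwu : Γ.Collinear w u)
    (huz : Γ.Collinear u z) (hzp : Γ.Collinear z p) : u ∈ Γ.centers S := by
  obtain ⟨-, D, hzD, hpD⟩ := id hzp
  obtain ⟨x, hx, hxD⟩ := h.exists_mem_of_mem_centers hp hpD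
  have hxp : x ≠ p := fun e => h.not_mem_of_mem_centers hp (e ▸ hx)
  have hwx : w ≠ x := by
    rintro rfl
    exact hwp.2.1 ⟨hxp, D, hxD, hpD⟩
  by_cases hzx : x = z
  · exact ⟨w, hw, x, hx, hwx, hwu, hzx ▸ huz.symm⟩
  obtain ⟨-, L, huL, hzL⟩ := id huz
  obtain ⟨v, hv, hvL⟩ := h.exists_mem_of_center hx hw hwx.symm hzL huL ⟨hzx, D, hxD, hzD⟩ hwu
    hzD hpD hp
  have hvu : v ≠ u := fun e => h.not_collinear w hw v hv (e ▸ hwu)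
  refine ⟨w, hw, v, hv, ?_, hwu, hvu, L, hvL, huL⟩
  rintro rfl
  by_cases hwz : w = z
  · exact hwp.2.1 (hwz ▸ hzp)
  · exact not_opposite_of_collinear_of_collinear ⟨hwz, L, hvL, hzL⟩ hzp hwp

theorem exists_mem_centers_of_opposite (h : Γ.IsPartialBlocking s t S) {w p : Γ.Point}
    {A : Γ.Line} (hw : w ∈ S) (hp : p ∈ Γ.centers S) (hwp : Γ.Opposite w p)
    (hwA : w ∈ Γ.pts A) : ∃ u ∈ Γ.pts A, u ∈ Γ.centers S := by
  obtain ⟨u, hu, hpu⟩ := h.hex.exists_special_of_far (h.hex.not_near_of_opposite hwp.symm hwA)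
  have hwu : w ≠ u := fun e => hwp.symm.2.2 (e ▸ hpu)
  obtain ⟨z, hpz, huz⟩ := hpu.2.2
  exact ⟨u, hu, h.mem_centers_of_path hw hp hwp ⟨hwu, A, hwA, hu⟩ huz hpz.symm⟩

theorem exists_mem_centers_of_collinear (h : Γ.IsPartialBlocking s t S) {x w p : Γ.Point}
    {A : Γ.Line} (hx : x ∈ S) (hw : w ∈ S) (hxw : Γ.Opposite x w) (hp : p ∈ Γ.centers S)
    (hxp : Γ.Collinear x p) (hxA : x ∈ Γ.pts A) : ∃ u ∈ Γ.pts A, u ∈ Γ.centers S := by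
  by_cases hpA : p ∈ Γ.pts A
  · exact ⟨p, hpA, hp⟩
  have hfar := h.hex.not_near_of_opposite hxw.symm hxA
  obtain ⟨a, ha, hwa⟩ := h.hex.exists_special_of_far hfar
  have hxa : x ≠ a := fun e => hxw.symm.2.2 (e ▸ hwa)
  have hcxa : Γ.Collinear x a := ⟨hxa, A, hxA, ha⟩
  obtain ⟨b, hwb, -, L, haL, hbL⟩ := hwa.2.2
  have hmeet : ∃ v ∈ S, v ∈ Γ.pts L := by
    by_contra hL
    push Not at hL
    obtain ⟨-, D, hxD, hpD⟩ := id hxp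
    obtain ⟨B, hpB, hBD⟩ := h.exists_line_ne p D
    obtain ⟨v, hv, hvB, hvD, hvp⟩ := h.exists_mem_not_mem hp hpB hpD hBD
    have hvx : v ≠ x := fun e => hvD (e ▸ hxD)
    obtain ⟨c, hc, hvc⟩ := h.exists_collinear_of_near_of_near hL hx hw hxw.1 haL hbL hcxa hwb hv
    refine h.hex.not_opposite_of_near (Or.inr ⟨c, hc, hvc⟩) haL (h.hex.opposite_of_path
      (b := p) (c := x) ⟨hvx, h.not_collinear v hv x hx, p, hvp, hxp⟩ ?_ hvp hxp.symm hcxa)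
    exact h.hex.special_of_collinear hpA hxA ha hxa.symm hxp.symm
  obtain ⟨v, hv, hvL⟩ := hmeet
  have hva : v ≠ a := fun e => h.not_collinear x hx v hv (e ▸ hcxa)
  refine ⟨a, ha, x, hx, v, hv, ?_, hcxa, hva, L, hvL, haL⟩
  rintro rfl
  obtain rfl := h.hex.line_unique hxa hxA ha hvL haL
  exact hfar (Or.inr ⟨b, hbL, hwb⟩)

theorem exists_opposite_center (h : Γ.IsPartialBlocking s t S) {w p : Γ.Point} (hw : w ∈ S)
    (hp : p ∈ Γ.centers S) (hwp : ¬ Γ.Collinear w p) :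
    ∃ w' ∈ S, Γ.Opposite w' p := by
  by_contra hno
  push Not at hno
  rcases not_opposite_iff.1 (hno w hw) with rfl | hc | hsp
  · exact h.not_mem_of_mem_centers hp hw
  · exact hwp hc
  obtain ⟨r, hwr, hpr⟩ := hsp.2.2
  obtain ⟨-, D, hpD, hrD⟩ := id hpr
  obtain ⟨D', hpD', hDD'⟩ := h.exists_line_ne p D
  obtain ⟨y, hy, hyD', hyD, hyp⟩ := h.exists_mem_not_mem hp hpD' hpD hDD'
  have hyw : Γ.Opposite y w := h.hex.opposite_of_path
    (h.hex.special_of_concurrent hDD' hpD' hpD hyD' hrD hyp.1 hpr.1.symm) hsp.symm hyp hpr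
    hwr.symm
  obtain ⟨A, hyA, hAD'⟩ := h.exists_line_ne y D'
  obtain ⟨r', hrA', hr'⟩ := h.exists_mem_centers_of_collinear hy hw hyw hp hyp hyA
  obtain ⟨B, hrB', hBA⟩ := h.exists_line_ne r' A
  obtain ⟨w', hw', hwB', hwA', hwr'⟩ := h.exists_mem_not_mem hr' hrB' hrA' hBA
  have hry : r' ≠ y := fun e => h.not_mem_of_mem_centers hr' (e ▸ hy)
  have hcry : Γ.Collinear r' y := ⟨hry, A, hrA', hyA⟩
  exact hno w' hw' (h.hex.opposite_of_path
    ⟨fun e => hwA' (e ▸ hyA), h.not_collinear w' hw' y hy, r', hwr', hcry.symm⟩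
    (h.hex.special_of_concurrent hAD' hyA hyD' hrA' hpD' hry hyp.1.symm) hwr' hcry hyp)

/-- If some centre is not collinear to all members of `S`, every line meeting `S` contains a
centre. -/
theorem exists_mem_centers (h : Γ.IsPartialBlocking s t S) {w p : Γ.Point} (hw : w ∈ S)
    (hp : p ∈ Γ.centers S) (hwp : ¬ Γ.Collinear w p) {x : Γ.Point} {A : Γ.Line} (hx : x ∈ S)
    (hxA : x ∈ Γ.pts A) : ∃ u ∈ Γ.pts A, u ∈ Γ.centers S := by
  obtain ⟨w, hw, hwp⟩ := h.exists_opposite_center hw hp hwp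
  by_cases hxp : Γ.Opposite x p
  · exact h.exists_mem_centers_of_opposite hx hp hxp hxA
  rcases not_opposite_iff.1 hxp with rfl | hc | hsp
  · exact absurd hx (h.not_mem_of_mem_centers hp)
  · obtain ⟨-, D, hxD, hpD⟩ := id hc
    obtain ⟨D', hpD', hDD'⟩ := h.exists_line_ne p D
    obtain ⟨z, hz, hwz⟩ := h.hex.exists_special_of_far (h.hex.not_near_of_opposite hwp hpD')
    have hzp : z ≠ p := fun e => hwp.2.2 (e ▸ hwz)
    obtain ⟨u, hwu, hzu⟩ := hwz.2.2
    have hczp : Γ.Collinear z p := ⟨hzp, D', hz, hpD'⟩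
    have hu := h.mem_centers_of_path hw hp hwp hwu hzu.symm hczp
    have hup : Γ.Special u p := by
      refine ⟨?_, fun hup => ?_, z, hzu.symm, hczp.symm⟩
      · rintro rfl
        exact hwp.2.1 hwu
      · exact not_opposite_of_collinear_of_collinear hwu hup hwp
    have hux : Γ.Opposite u x := h.hex.opposite_of_path hup
      (h.hex.special_of_concurrent hDD' hpD' hpD hz hxD hzp hc.1) hzu.symm hczp hc.symm
    exact h.exists_mem_centers_of_opposite hx hu hux.symm hxA
  · obtain ⟨r, hxr, hpr⟩ := hsp.2.2
    obtain ⟨-, D, hpD, hrD⟩ := id hpr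
    obtain ⟨y, hy, hyD⟩ := h.exists_mem_of_mem_centers hp hpD
    have hyr : y ≠ r := fun e => h.not_collinear x hx y hy (e ▸ hxr)
    have hr : r ∈ Γ.centers S :=
      ⟨x, hx, y, hy, fun e => hsp.not_mem hpD (e ▸ hyD), hxr, hyr, D, hyD, hrD⟩
    obtain ⟨D', hpD', hDD'⟩ := h.exists_line_ne p D
    obtain ⟨v, hv, hvD', hvD, hvp⟩ := h.exists_mem_not_mem hp hpD' hpD hDD'
    have hxv : Γ.Opposite x v := h.hex.opposite_of_path hsp
      (h.hex.special_of_concurrent hDD'.symm hpD hpD' hrD hvD' hpr.1.symm hvp.1) hxr hpr.symm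
      hvp.symm
    exact h.exists_mem_centers_of_collinear hx hv hxv hr hxr hxA

end IsPartialBlocking

end GenHexagon

namespace GenHexagon

variable {Γ : GenHexagon}

/-- The incidence structure induced on the members of `S` and the centres, with the lines
meeting `S`. -/
def sub (Γ : GenHexagon) (S : Set Γ.Point) : GenHexagon where
  Point := {u : Γ.Point // u ∈ S ∪ Γ.centers S}
  Line := {L : Γ.Line // ∃ x ∈ S, x ∈ Γ.pts L}
  pts L := {u | u.1 ∈ Γ.pts L.1}

/-- A partial blocking set all of whose lines contain a centre. -/
structure IsSaturated (Γ : GenHexagon) (s t : ℕ) (S : Set Γ.Point) : Prop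
    extends Γ.IsPartialBlocking s t S where
  saturated : ∀ x ∈ S, ∀ A, x ∈ Γ.pts A → ∃ u ∈ Γ.pts A, u ∈ Γ.centers S

namespace IsSaturated

variable {s t : ℕ} {S : Set Γ.Point}

theorem exists_mem_of_near_of_near (h : Γ.IsSaturated s t S) {L : Γ.Line} {x w c d : Γ.Point}
    (hx : x ∈ S) (hw : w ∈ S) (hxw : x ≠ w) (hc : c ∈ Γ.pts L) (hd : d ∈ Γ.pts L)
    (hxc : Γ.Collinear x c) (hwd : Γ.Collinear w d) : ∃ z ∈ S, z ∈ Γ.pts L := by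
  obtain ⟨-, D, hxD, hcD⟩ := id hxc
  obtain ⟨r, hrD, hr⟩ := h.saturated x hx D hxD
  exact h.exists_mem_of_center hx hw hxw hc hd hxc hwd hcD hrD hr

theorem exists_mem_of_mem_union (h : Γ.IsSaturated s t S) {u : Γ.Point} {L : Γ.Line}
    (hu : u ∈ S ∪ Γ.centers S) (huL : u ∈ Γ.pts L) : ∃ x ∈ S, x ∈ Γ.pts L := by
  rcases hu with hu | hu
  · exact ⟨u, hu, huL⟩
  · exact h.exists_mem_of_mem_centers hu huL

/-- The intersection point of two lines meeting `S` is in `S` or a centre. -/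
theorem mem_union_of_mem_of_mem (h : Γ.IsSaturated s t S) {x x' c : Γ.Point} {L M : Γ.Line}
    (hLM : L ≠ M) (hx : x ∈ S) (hxL : x ∈ Γ.pts L) (hx' : x' ∈ S) (hxM' : x' ∈ Γ.pts M)
    (hcL : c ∈ Γ.pts L) (hcM : c ∈ Γ.pts M) : c ∈ S ∪ Γ.centers S := by
  by_cases hxc : x = c
  · exact Or.inl (hxc ▸ hx)
  by_cases hxc' : x' = c
  · exact Or.inl (hxc' ▸ hx')
  refine Or.inr ⟨x, hx, x', hx', ?_, ⟨hxc, L, hxL, hcL⟩, hxc', M, hxM', hcM⟩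
  rintro rfl
  exact hLM (h.hex.line_unique hxc hxL hcL hxM' hcM)

theorem mem_union_of_collinear (h : Γ.IsSaturated s t S) {u x y : Γ.Point} {L : Γ.Line}
    (hu : u ∈ S ∪ Γ.centers S) (hx : x ∈ S) (hxL : x ∈ Γ.pts L) (hy : y ∈ Γ.pts L)
    (huL : u ∉ Γ.pts L) (huy : Γ.Collinear u y) : y ∈ S ∪ Γ.centers S := by
  obtain ⟨-, M, huM, hyM⟩ := huy
  obtain ⟨v, hv, hvM⟩ := h.exists_mem_of_mem_union hu huM
  exact h.mem_union_of_mem_of_mem (by rintro rfl; exact huL huM) hv hvM hx hxL hyM hy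

theorem mem_union_of_path (h : Γ.IsSaturated s t S) {u c y x : Γ.Point} {L : Γ.Line}
    (hu : u ∈ S ∪ Γ.centers S) (hx : x ∈ S) (hxL : x ∈ Γ.pts L) (hy : y ∈ Γ.pts L)
    (huL : ¬ Γ.Near u L) (huc : Γ.Collinear u c) (hcy : Γ.Collinear c y) :
    c ∈ S ∪ Γ.centers S ∧ y ∈ S ∪ Γ.centers S := by
  obtain ⟨-, M, huM, hcM⟩ := id huc
  obtain ⟨-, N, hcN, hyN⟩ := id hcy
  obtain ⟨v, hv, hvM⟩ := h.exists_mem_of_mem_union hu huM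
  have huNear : ∀ {z K}, z ∈ Γ.pts L → u ∈ Γ.pts K → z ∉ Γ.pts K := by
    intro z K hzL huK hzK
    exact huL (Or.inr ⟨z, hzL, fun e => huL (Or.inl (e ▸ hzL)), K, huK, hzK⟩)
  have hmeet : ∃ z ∈ S, z ∈ Γ.pts N := by
    by_cases hvc : v = c
    · exact ⟨v, hv, hvc ▸ hcN⟩
    by_cases hxy : x = y
    · exact ⟨x, hx, hxy ▸ hyN⟩
    refine h.exists_mem_of_near_of_near hv hx ?_ hcN hyN ⟨hvc, M, hvM, hcM⟩ ⟨hxy, L, hxL, hy⟩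
    rintro rfl
    exact huNear hxL huM hvM
  obtain ⟨z, hz, hzN⟩ := hmeet
  have hc := h.mem_union_of_collinear hu hz hzN hcN (fun huN => huNear hy huN hyN) huc
  exact ⟨hc, h.mem_union_of_collinear hc hx hxL hy (fun hcL => huL (Or.inr ⟨c, hcL, huc⟩)) hcy⟩

theorem sub_collinear_iff (h : Γ.IsSaturated s t S) {u v : (Γ.sub S).Point} :
    (Γ.sub S).Collinear u v ↔ Γ.Collinear u.1 v.1 := by
  constructor
  · rintro ⟨hne, L, hu, hv⟩
    exact ⟨fun e => hne (Subtype.ext e), L.1, hu, hv⟩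
  · rintro ⟨hne, L, hu, hv⟩
    exact ⟨fun e => hne (e ▸ rfl), ⟨L, h.exists_mem_of_mem_union u.2 hu⟩, hu, hv⟩

theorem sub_special_iff (h : Γ.IsSaturated s t S) {u v : (Γ.sub S).Point} :
    (Γ.sub S).Special u v ↔ Γ.Special u.1 v.1 := by
  constructor
  · rintro ⟨hne, hnc, c, huc, hvc⟩
    exact ⟨fun e => hne (Subtype.ext e), fun hc => hnc (h.sub_collinear_iff.2 hc), c.1,
      h.sub_collinear_iff.1 huc, h.sub_collinear_iff.1 hvc⟩
  · rintro ⟨hne, hnc, c, huc, hvc⟩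
    obtain ⟨-, M, huM, hcM⟩ := id huc
    obtain ⟨-, N, hvN, hcN⟩ := id hvc
    obtain ⟨x, hx, hxM⟩ := h.exists_mem_of_mem_union u.2 huM
    obtain ⟨y, hy, hyN⟩ := h.exists_mem_of_mem_union v.2 hvN
    have hMN : M ≠ N := fun e => hnc ⟨hne, M, huM, e ▸ hvN⟩
    exact ⟨fun e => hne (e ▸ rfl), fun hc => hnc (h.sub_collinear_iff.1 hc),
      ⟨c, h.mem_union_of_mem_of_mem hMN hx hxM hy hyN hcM hcN⟩,
      h.sub_collinear_iff.2 huc, h.sub_collinear_iff.2 hvc⟩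

theorem sub_isHex (h : Γ.IsSaturated s t S) : (Γ.sub S).IsHex where
  line_unique hxy h₁ h₂ h₃ h₄ :=
    Subtype.ext (h.hex.line_unique (fun e => hxy (Subtype.ext e)) h₁ h₂ h₃ h₄)
  no_triangle {x a b L} hab ha hb hxa hxb :=
    h.hex.no_triangle (x := x.1) (L := L.1) (fun e => hab (Subtype.ext e)) ha hb
      (h.sub_collinear_iff.1 hxa) (h.sub_collinear_iff.1 hxb)
  no_quadrangle hxy hnc h₁ h₂ h₃ h₄ :=
    Subtype.ext (h.hex.no_quadrangle (fun e => hxy (Subtype.ext e))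
      (fun hc => hnc (h.sub_collinear_iff.2 hc)) (h.sub_collinear_iff.1 h₁)
      (h.sub_collinear_iff.1 h₂) (h.sub_collinear_iff.1 h₃) (h.sub_collinear_iff.1 h₄))
  no_pentagon {x a b L} hab ha hb hxa hxb := by
    obtain ⟨c, hc, hxc⟩ := h.hex.no_pentagon (x := x.1) (L := L.1)
      (fun e => hab (Subtype.ext e)) ha hb (h.sub_special_iff.1 hxa) (h.sub_special_iff.1 hxb)
    obtain ⟨z, hz, hzL⟩ := L.2
    have hxL : x.1 ∉ Γ.pts L.1 := (h.sub_special_iff.1 hxa).not_mem ha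
    exact ⟨⟨c, h.mem_union_of_collinear x.2 hz hzL hc hxL hxc⟩, hc, h.sub_collinear_iff.2 hxc⟩
  exists_not_opposite x L := by
    obtain ⟨z, hz, hzL⟩ := L.2
    by_cases hxL : x.1 ∈ Γ.pts L.1
    · exact ⟨x, hxL, not_opposite_self x⟩
    by_cases hnear : Γ.Near x.1 L.1
    · obtain hn | ⟨a, ha, hxa⟩ := hnear
      · exact absurd hn hxL
      · exact ⟨⟨a, h.mem_union_of_collinear x.2 hz hzL ha hxL hxa⟩, ha,
          (h.sub_collinear_iff.2 hxa).not_opposite⟩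
    · obtain ⟨y, hy, hsp⟩ := h.hex.exists_special_of_far hnear
      obtain ⟨c, hxc, hyc⟩ := hsp.2.2
      exact ⟨⟨y, (h.mem_union_of_path x.2 hz hzL hy hnear hxc hyc.symm).2⟩, hy,
        (h.sub_special_iff.2 hsp).not_opposite⟩

theorem sub_encard_lines (h : Γ.IsSaturated s t S) (u : (Γ.sub S).Point) :
    {L | u ∈ (Γ.sub S).pts L}.encard = t + 1 := by
  have himg := Function.Injective.encard_image
    (f := (Subtype.val : (Γ.sub S).Line → Γ.Line)) Subtype.val_injective
    {L | u ∈ (Γ.sub S).pts L}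
  refine himg.symm.trans ((congrArg Set.encard ?_).trans (h.order.2 u.1))
  ext L
  constructor
  · rintro ⟨L', hL', rfl⟩
    exact hL'
  · intro hL
    exact ⟨⟨L, h.exists_mem_of_mem_union u.2 hL⟩, hL, rfl⟩

theorem sub_pts_nontrivial (h : Γ.IsSaturated s t S) (L : (Γ.sub S).Line) :
    ((Γ.sub S).pts L).Nontrivial := by
  obtain ⟨x, hx, hxL⟩ := L.2
  obtain ⟨r, hrL, hr⟩ := h.saturated x hx L.1 hxL
  exact ⟨⟨x, Or.inl hx⟩, hxL, ⟨r, Or.inr hr⟩, hrL,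
    fun e => ne_of_mem_of_not_mem hx (h.not_mem_of_mem_centers hr) (congrArg Subtype.val e)⟩

theorem sub_pts_finite (h : Γ.IsSaturated s t S) (L : (Γ.sub S).Line) :
    ((Γ.sub S).pts L).Finite :=
  (h.order.finite_pts L.1).preimage Subtype.val_injective.injOn

end IsSaturated

namespace IsHex

theorem encard_le_of_oppLines (h : Γ.IsHex) {L M : Γ.Line} (hLM : Γ.OppLines L M) :
    (Γ.pts L).encard ≤ (Γ.pts M).encard := by
  have hex : ∀ x, ∃ y, x ∈ Γ.pts L → y ∈ Γ.pts M ∧ Γ.Special x y := by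
    intro x
    by_cases hx : x ∈ Γ.pts L
    · obtain ⟨y, hy⟩ := h.exists_special_of_far (hLM.not_near hx)
      exact ⟨y, fun _ => hy⟩
    · exact ⟨x, fun hx' => absurd hx' hx⟩
  choose f hf using hex
  refine Set.encard_le_encard_of_injOn (fun x hx => (hf x hx).1) (fun x hx x' hx' he => ?_)
  refine h.eq_of_special_of_far (x := f x) (L := L) ?_ hx hx' (hf x hx).2.symm
    (he ▸ (hf x' hx').2.symm)
  rintro (hm | ⟨a, ha, hca⟩)
  · exact hLM.1 _ hm (hf x hx).1
  · exact hLM.2 a ha _ (hf x hx).1 hca.symm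

theorem _root_.GenHexagon.OppLines.symm {L M : Γ.Line} (hLM : Γ.OppLines L M) :
    Γ.OppLines M L :=
  ⟨fun x hx hx' => hLM.1 x hx' hx, fun x hx y hy hc => hLM.2 y hy x hx hc.symm⟩

/-- In a hexagon with at least three lines through every point and at least two points on every
line, all lines have the same number of points. -/
theorem encard_pts_eq (h : Γ.IsHex) (hl : ∀ x, 3 ≤ {L | x ∈ Γ.pts L}.encard)
    (hp : ∀ L, (Γ.pts L).Nontrivial) (L M : Γ.Line) :
    (Γ.pts L).encard = (Γ.pts M).encard := by
  have hline : ∀ (x : Γ.Point) (L M : Γ.Line), ∃ K, x ∈ Γ.pts K ∧ K ≠ L ∧ K ≠ M := by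
    intro x L M
    by_contra hno
    push Not at hno
    have hsub : {L | x ∈ Γ.pts L} ⊆ {L, M} := fun K hK => or_iff_not_imp_left.2 (hno K hK)
    have hle := (hl x).trans ((Set.encard_le_encard hsub).trans (Set.encard_insert_le {M} L))
    rw [Set.encard_singleton] at hle
    norm_num at hle
  have hpt : ∀ L x, ∃ v ∈ Γ.pts L, v ≠ x := fun L x => (hp L).exists_ne x
  have hconc : ∀ {u L M}, u ∈ Γ.pts L → u ∈ Γ.pts M →
      (Γ.pts L).encard = (Γ.pts M).encard := by
    intro u L M huL huM
    obtain ⟨K, huK, hKL, hKM⟩ := hline u L M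
    obtain ⟨v, hv, hvu⟩ := hpt K u
    obtain ⟨D, hvD, hDK, -⟩ := hline v K K
    obtain ⟨w, hw, hwv⟩ := hpt D v
    obtain ⟨N, hwN, hND, -⟩ := hline w D D
    have key : ∀ {L}, u ∈ Γ.pts L → K ≠ L → Γ.OppLines L N := fun {L} huL hKL =>
      h.oppLines_of_path (x := v)
        (h.special_of_concurrent hDK.symm hv hvD huK hw hvu.symm hwv)
        ⟨hvu.symm, K, huK, hv⟩ ⟨hwv, D, hw, hvD⟩ huL hwN
        (fun hvL => hKL (h.line_unique hvu hv huK hvL huL))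
        (fun hvN => hND (h.line_unique hwv hwN hvN hw hvD)) (hpt L u) (hpt N w)
    exact (le_antisymm (h.encard_le_of_oppLines (key huL hKL))
      (h.encard_le_of_oppLines (key huL hKL).symm)).trans
      (le_antisymm (h.encard_le_of_oppLines (key huM hKM))
      (h.encard_le_of_oppLines (key huM hKM).symm)).symm
  obtain ⟨x, hx⟩ := (hp L).nonempty
  obtain ⟨y, hy, hxy⟩ := h.exists_not_opposite x M
  rcases not_opposite_iff.1 hxy with rfl | ⟨-, K, hxK, hyK⟩ |
    ⟨-, -, z, ⟨-, K, hxK, hzK⟩, -, K', hyK', hzK'⟩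
  · exact hconc hx hy
  · exact (hconc hx hxK).trans (hconc hyK hy)
  · exact (hconc hx hxK).trans ((hconc hzK hzK').trans (hconc hyK' hy))

end IsHex

/-- The induced structure has an order `(e, t)` with `e ≥ 1`. -/
theorem IsSaturated.exists_sub_hasOrder {s t : ℕ} {S : Set Γ.Point}
    (h : Γ.IsSaturated s t S) : ∃ e, 0 < e ∧ (Γ.sub S).HasOrder e t := by
  obtain ⟨x, hx⟩ := h.nontrivial.nonempty
  obtain ⟨L, hxL⟩ : {L | x ∈ Γ.pts L}.Nonempty := by
    rw [← Set.ncard_pos (h.order.finite_lines x), h.order.ncard_lines]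
    omega
  let L₀ : (Γ.sub S).Line := ⟨L, x, hx, hxL⟩
  have hcard : 1 < ((Γ.sub S).pts L₀).ncard :=
    Set.one_lt_ncard_iff_nontrivial_and_finite.2 ⟨h.sub_pts_nontrivial L₀, h.sub_pts_finite L₀⟩
  refine ⟨((Γ.sub S).pts L₀).ncard - 1, by omega, fun M => ?_, h.sub_encard_lines⟩
  rw [h.sub_isHex.encard_pts_eq (fun u => ?_) h.sub_pts_nontrivial M L₀,
    ← (h.sub_pts_finite L₀).cast_ncard_eq]
  · norm_cast
    omega
  · rw [h.sub_encard_lines]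
    have := h.one_lt_t
    norm_cast
    omega

end GenHexagon

namespace GenHexagon

variable {Γ : GenHexagon} {s t : ℕ}

theorem HasOrder.exists_line (hord : Γ.HasOrder s t) (x : Γ.Point) : ∃ L, x ∈ Γ.pts L := by
  obtain ⟨L, hL⟩ : {L | x ∈ Γ.pts L}.Nonempty := by
    rw [← Set.ncard_pos (hord.finite_lines x), hord.ncard_lines]
    omega
  exact ⟨L, hL⟩

theorem IsHex.finite_point (h : Γ.IsHex) (hord : Γ.HasOrder s t) : Finite Γ.Point := by
  by_cases hne : Nonempty Γ.Point
  swap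
  · rw [not_nonempty_iff] at hne
    infer_instance
  obtain ⟨x⟩ := hne
  let star : Γ.Point → Set Γ.Point := fun x => ⋃ L ∈ {L | x ∈ Γ.pts L}, Γ.pts L
  have hfin : ∀ x, (star x).Finite := fun x =>
    (hord.finite_lines x).biUnion fun L _ => hord.finite_pts L
  have hmem : ∀ {x y L}, x ∈ Γ.pts L → y ∈ Γ.pts L → y ∈ star x := fun hx hy =>
    Set.mem_biUnion (t := Γ.pts) hx hy
  have hself : ∀ x, x ∈ star x := fun x => by
    obtain ⟨L, hL⟩ := hord.exists_line x
    exact hmem hL hL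
  have hball : (⋃ a ∈ star x, ⋃ b ∈ star a, star b).Finite :=
    (hfin x).biUnion fun a _ => (hfin a).biUnion fun b _ => hfin b
  refine Set.finite_univ_iff.1 (hball.subset fun y _ => ?_)
  obtain ⟨L, hyL⟩ := hord.exists_line y
  obtain ⟨z, hzL, hxz⟩ := h.exists_not_opposite x L
  have key : ∃ a, a ∈ star x ∧ z ∈ star a := by
    rcases not_opposite_iff.1 hxz with rfl | ⟨-, K, hxK, hzK⟩ |
      ⟨-, -, c, ⟨-, K, hxK, hcK⟩, -, K', hzK', hcK'⟩
    · exact ⟨x, hself x, hself x⟩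
    · exact ⟨x, hself x, hmem hxK hzK⟩
    · exact ⟨c, hmem hxK hcK, hmem hcK' hzK'⟩
  obtain ⟨a, ha, haz⟩ := key
  exact Set.mem_biUnion ha (Set.mem_biUnion haz (hmem hzL hyL))

namespace IsHex

theorem ncard_collinear (h : Γ.IsHex) (hord : Γ.HasOrder s t) (x : Γ.Point) :
    {z | Γ.Collinear x z}.ncard = s * (t + 1) := by
  classical
  let F := (hord.finite_lines x).toFinset
  let G : Γ.Line → Finset Γ.Point := fun L => (hord.finite_pts L).toFinset.erase x
  have hG : {z | Γ.Collinear x z} = ↑(F.biUnion G) := by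
    ext z
    simp only [Set.mem_ofPred_eq, Finset.coe_biUnion, Set.mem_iUnion, F, G, Finset.mem_coe,
      Finset.mem_erase, Set.Finite.mem_toFinset, Collinear, exists_prop]
    constructor
    · rintro ⟨hne, L, hxL, hzL⟩
      exact ⟨L, hxL, hne.symm, hzL⟩
    · rintro ⟨L, hxL, hne, hzL⟩
      exact ⟨hne.symm, L, hxL, hzL⟩
  have hcard : ∀ L ∈ F, (G L).card = s := by
    intro L hL
    have hx : x ∈ (hord.finite_pts L).toFinset := by simpa [F] using hL
    rw [Finset.card_erase_of_mem hx, ← Set.ncard_eq_toFinset_card _ (hord.finite_pts L), hord.ncard_pts]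
    rfl
  have hdisj : (F : Set Γ.Line).PairwiseDisjoint G := by
    intro L hL M hM hLM
    refine Finset.disjoint_left.2 fun z hz hz' => hLM ?_
    simp only [F, G, Finset.mem_coe, Finset.mem_erase, Set.Finite.mem_toFinset,
      Set.mem_ofPred_eq] at hL hM hz hz'
    exact h.line_unique hz.1 hz.2 hL hz'.2 hM
  rw [hG, Set.ncard_coe_finset, Finset.card_biUnion hdisj, Finset.sum_congr rfl hcard,
    Finset.sum_const, ← Set.ncard_eq_toFinset_card _ (hord.finite_lines x), hord.ncard_lines, smul_eq_mul, mul_comm]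

theorem ncard_pts_diff_pair (hord : Γ.HasOrder s t) {x y : Γ.Point} {L : Γ.Line} (hxy : x ≠ y)
    (hx : x ∈ Γ.pts L) (hy : y ∈ Γ.pts L) : (Γ.pts L \ {x, y}).ncard = s - 1 := by
  rw [Set.ncard_sdiff (by rintro v (rfl | rfl) <;> assumption), Set.ncard_pair hxy,
    hord.ncard_pts]
  rfl

theorem ncard_collinear_collinear (h : Γ.IsHex) (hord : Γ.HasOrder s t) {x y : Γ.Point}
    (hxy : Γ.Collinear x y) : {z | Γ.Collinear x z ∧ Γ.Collinear z y}.ncard = s - 1 := by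
  obtain ⟨hne, L, hx, hy⟩ := hxy
  rw [← ncard_pts_diff_pair hord hne hx hy]
  congr 1
  ext z
  simp only [Set.mem_ofPred_eq, Set.mem_sdiff, Set.mem_insert_iff, Set.mem_singleton_iff, not_or]
  exact ⟨fun hz => ⟨h.no_triangle hne hx hy hz.1.symm hz.2, hz.1.1.symm, hz.2.1⟩,
    fun hz => ⟨⟨Ne.symm hz.2.1, L, hx, hz.1⟩, hz.2.2, L, hz.1, hy⟩⟩

theorem ncard_collinear_collinear_of_special (h : Γ.IsHex) {x y : Γ.Point}
    (hxy : Γ.Special x y) : {z | Γ.Collinear x z ∧ Γ.Collinear z y}.ncard = 1 := by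
  obtain ⟨hne, hnc, c, hxc, hyc⟩ := hxy
  refine Set.ncard_eq_one.2 ⟨c, Set.ext fun z => ⟨fun hz => ?_, ?_⟩⟩
  · exact h.no_quadrangle hne hnc hz.1 hz.2.symm hxc hyc
  · rintro rfl
    exact ⟨hxc, hyc.symm⟩

theorem ncard_collinear_special_of_collinear (h : Γ.IsHex) (hord : Γ.HasOrder s t)
    {x y : Γ.Point} (hxy : Γ.Collinear x y) :
    {z | Γ.Collinear x z ∧ Γ.Special z y}.ncard = s * t := by
  obtain ⟨hne, L, hx, hy⟩ := hxy
  have heq : {z | Γ.Collinear x z ∧ Γ.Special z y} =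
      {z | Γ.Collinear x z} \ (Γ.pts L \ {x}) := by
    ext z
    simp only [Set.mem_ofPred_eq, Set.mem_sdiff, Set.mem_singleton_iff, not_and, not_not]
    refine and_congr_right fun hxz => ⟨fun hzy hzL => absurd hzL (hzy.not_mem hy), fun hz => ?_⟩
    exact h.special_of_collinear (fun hzL => hxz.1 (hz hzL).symm) hx hy hne.symm hxz.symm
  have hsub : Γ.pts L \ {x} ⊆ {z | Γ.Collinear x z} := fun z hz =>
    ⟨fun e => hz.2 e.symm, L, hx, hz.1⟩
  rw [heq, Set.ncard_sdiff hsub ((hord.finite_pts L).subset Set.sdiff_subset),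
    Set.ncard_sdiff_singleton_of_mem hx, hord.ncard_pts, h.ncard_collinear hord, Nat.mul_succ]
  omega

theorem ncard_collinear_special_of_special (h : Γ.IsHex) (hord : Γ.HasOrder s t)
    {x y : Γ.Point} (hxy : Γ.Special x y) :
    {z | Γ.Collinear x z ∧ Γ.Special z y}.ncard = s - 1 := by
  obtain ⟨hne, hnc, c, hxc, hyc⟩ := id hxy
  obtain ⟨hxc', L, hx, hc⟩ := id hxc
  rw [← ncard_pts_diff_pair hord hxc' hx hc]
  congr 1
  ext z
  simp only [Set.mem_ofPred_eq, Set.mem_sdiff, Set.mem_insert_iff, Set.mem_singleton_iff, not_or]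
  constructor
  · rintro ⟨hxz, hzy⟩
    refine ⟨?_, hxz.1.symm, fun e => hzy.2.1 (e ▸ hyc.symm)⟩
    by_contra hzL
    exact hzy.not_opposite (h.opposite_of_path
      (h.special_of_collinear hzL hx hc hxc'.symm hxz.symm) hxy hxz.symm hxc hyc.symm)
  · rintro ⟨hzL, hzx, hzc⟩
    exact ⟨⟨Ne.symm hzx, L, hx, hzL⟩,
      (h.special_of_collinear (hxy.symm.not_mem hx) hc hzL hzc hyc).symm⟩

theorem ncard_collinear_special_of_opposite (h : Γ.IsHex) (hord : Γ.HasOrder s t)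
    {x y : Γ.Point} (hxy : Γ.Opposite x y) :
    {z | Γ.Collinear x z ∧ Γ.Special z y}.ncard = t + 1 := by
  have hfar : ∀ {L}, x ∈ Γ.pts L → ¬ Γ.Near y L := fun hL => h.not_near_of_opposite hxy.symm hL
  have hex : ∀ L, ∃ z, x ∈ Γ.pts L → z ∈ Γ.pts L ∧ Γ.Special y z := by
    intro L
    by_cases hL : x ∈ Γ.pts L
    · obtain ⟨z, hz⟩ := h.exists_special_of_far (hfar hL)
      exact ⟨z, fun _ => hz⟩
    · exact ⟨x, fun hL' => absurd hL' hL⟩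
  choose f hf using hex
  have hfx : ∀ {z}, Γ.Special y z → z ≠ x := fun hz e => hxy.symm.2.2 (e ▸ hz)
  rw [← hord.ncard_lines x]
  symm
  refine Set.ncard_congr (fun L _ => f L) (fun L hL => ?_) (fun L M hL hM he => ?_)
    fun z hz => ?_
  · exact ⟨⟨(hfx (hf L hL).2).symm, L, hL, (hf L hL).1⟩, (hf L hL).2.symm⟩
  · exact h.line_unique (hfx (hf L hL).2) (hf L hL).1 hL (he ▸ (hf M hM).1) hM
  · obtain ⟨⟨hxz, L, hx, hzL⟩, hzy⟩ := hz
    exact ⟨L, hx, h.eq_of_special_of_far (hfar hx) (hf L hx).1 hzL (hf L hx).2 hzy.symm⟩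

end IsHex

end GenHexagon

open Polynomial in
theorem Matrix.IsHermitian.exists_trace_aeval_eq_sum {n : Type*} [Fintype n] [DecidableEq n]
    {A : Matrix n n ℝ} (hA : A.IsHermitian) : ∃ ev : n → ℝ,
    (∀ q : ℝ[X], (aeval A q).trace = ∑ i, q.eval (ev i)) ∧
    ∀ q : ℝ[X], aeval A q = 0 → ∀ i, q.eval (ev i) = 0 := by
  refine ⟨hA.eigenvalues, ?_⟩
  have key : ∀ q : ℝ[X], aeval A q = Unitary.conjStarAlgAut ℝ _ hA.eigenvectorUnitary
      (Matrix.diagonal fun i => q.eval (hA.eigenvalues i)) := by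
    intro q
    have hdiag : aeval (Matrix.diagonal hA.eigenvalues) q =
        Matrix.diagonal fun i => q.eval (hA.eigenvalues i) := by
      have h := aeval_algHom_apply (Matrix.diagonalAlgHom ℝ (n := n)) hA.eigenvalues q
      simp only [Matrix.diagonalAlgHom_apply] at h
      rw [h]
      congr 1
      ext i
      rw [← coe_aeval_eq_eval]
      exact (aeval_algHom_apply (Pi.evalAlgHom ℝ (fun _ : n => ℝ) i) hA.eigenvalues q).symm
    rw [← hdiag, ← aeval_algHom_apply]
    congr 2
    exact hA.spectral_theorem
  refine ⟨fun q => ?_, fun q hq i => ?_⟩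
  · rw [key, Unitary.conjStarAlgAut_apply, Matrix.trace_mul_cycle, Unitary.coe_star_mul_self,
      one_mul, Matrix.trace_diagonal]
  · rw [key, EmbeddingLike.map_eq_zero_iff, Matrix.diagonal_eq_zero] at hq
    exact congrFun hq i

theorem Nat.isSquare_of_mul_sq_eq_sq {m : ℕ} {a b : ℤ} (hb : b ≠ 0)
    (h : (m : ℤ) * a ^ 2 = b ^ 2) : IsSquare m := by
  have ha : a ≠ 0 := by
    rintro rfl
    exact hb (pow_eq_zero_iff two_ne_zero |>.1 (by rw [← h]; ring))
  obtain ⟨c, rfl⟩ : a ∣ b := (Int.pow_dvd_pow_iff two_ne_zero).1 ⟨m, by rw [← h]; ring⟩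
  have hm : (m : ℤ) = c ^ 2 := mul_right_cancel₀ (pow_ne_zero 2 ha) (by rw [h]; ring)
  refine ⟨c.natAbs, ?_⟩
  zify
  rw [hm, abs_mul_abs_self, sq]

section EigenvalueArithmetic

variable {ι : Type*} [Fintype ι] {ev : ι → ℝ} {s t : ℕ}

open Classical in
theorem sum_eq_card_mul_of_eq_zero (f : ℝ → ℝ) (a : ℝ) (h : ∀ i, ev i ≠ a → f (ev i) = 0) :
    ∑ i, f (ev i) = (Finset.univ.filter fun i => ev i = a).card * f a := by
  rw [← nsmul_eq_mul, ← Finset.sum_const, Finset.sum_filter]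
  refine Finset.sum_congr rfl fun i _ => ?_
  split_ifs with hi
  · rw [hi]
  · exact h i hi

/-- The multiplicities of the eigenvalues of the collinearity graph of a generalised hexagon of
order `(s, t)` are determined by the first three power sums. -/
theorem eigenvalue_arithmetic (hs : 0 < s) (ht : 0 < t)
    (hcard : (Fintype.card ι : ℝ) = (s + 1) * (1 + s * t + s ^ 2 * t ^ 2))
    (h₁ : ∑ i, ev i = 0) (h₂ : ∑ i, ev i ^ 2 = Fintype.card ι * (s * (t + 1)))
    (h₃ : ∑ i, ev i ^ 3 = Fintype.card ι * (s * (t + 1)) * (s - 1))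
    (hroot : ∀ i, (ev i - s * (t + 1)) *
      ((ev i + (t + 1)) * ((ev i - (s - 1)) ^ 2 - s * t)) = 0) :
    s ^ 2 + s * t + t ^ 2 ∣ s ^ 3 * (1 + s * t + s ^ 2 * t ^ 2) ∧
      (1 < s → 1 < t → IsSquare (s * t)) := by
  classical
  have hs' : (0 : ℝ) < s := by exact_mod_cast hs
  have ht' : (0 : ℝ) < t := by exact_mod_cast ht
  have hcub : ∀ a b c : ℝ, ∑ i, (ev i ^ 3 + a * ev i ^ 2 + b * ev i + c) =
      Fintype.card ι * (s * (t + 1)) * (s - 1) + a * (Fintype.card ι * (s * (t + 1))) +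
        Fintype.card ι * c := by
    intro a b c
    simp only [Finset.sum_add_distrib, ← Finset.mul_sum, h₁, h₂, h₃, Finset.sum_const,
      Finset.card_univ, nsmul_eq_mul]
    ring
  set mk := (Finset.univ.filter fun i => ev i = s * (t + 1)).card with hmk
  set m₀ := (Finset.univ.filter fun i => ev i = -((t : ℝ) + 1)).card with hm₀
  have hmk1 : (mk : ℝ) = 1 := by
    have h := sum_eq_card_mul_of_eq_zero (ev := ev)
      (fun x => (x + (t + 1)) * ((x - (s - 1)) ^ 2 - s * t)) (s * (t + 1))
      fun i hi => (mul_eq_zero.1 (hroot i)).resolve_left (sub_ne_zero.2 hi)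
    have h' := hcub (t + 1 - 2 * (s - 1)) ((s - 1) ^ 2 - s * t - 2 * (s - 1) * (t + 1))
      ((t + 1) * ((s - 1) ^ 2 - s * t))
    rw [Finset.sum_congr rfl fun i _ => show _ = (ev i + (t + 1)) * ((ev i - (s - 1)) ^ 2 - s * t)
      by ring, h, hcard, ← hmk] at h'
    have hpos : (0 : ℝ) < (s + 1) * (t + 1) * (1 + s * t + s ^ 2 * t ^ 2) := by positivity
    exact mul_right_cancel₀ hpos.ne' (by linear_combination h')
  have hm₀Q : (m₀ : ℝ) * (s ^ 2 + s * t + t ^ 2) = s ^ 3 * (1 + s * t + s ^ 2 * t ^ 2) := by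
    have h := sum_eq_card_mul_of_eq_zero (ev := ev)
      (fun x => (x - s * (t + 1)) * ((x - (s - 1)) ^ 2 - s * t)) (-((t : ℝ) + 1))
      fun i hi => by
        rcases mul_eq_zero.1 (hroot i) with h0 | h0
        · simp only [h0, zero_mul]
        · have := (mul_eq_zero.1 h0).resolve_left fun e => hi (by linear_combination e)
          simp only [this, mul_zero]
    have h' := hcub (-(s * (t + 1)) - 2 * (s - 1))
      ((s - 1) ^ 2 - s * t + 2 * (s - 1) * (s * (t + 1)))
      (-(s * (t + 1)) * ((s - 1) ^ 2 - s * t))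
    rw [Finset.sum_congr rfl fun i _ => show _ = (ev i - s * (t + 1)) *
      ((ev i - (s - 1)) ^ 2 - s * t) by ring, h, hcard, ← hm₀] at h'
    have hpos : (0 : ℝ) < (s + 1) * (t + 1) := by positivity
    exact mul_right_cancel₀ hpos.ne' (by linear_combination -h')
  refine ⟨⟨m₀, by rw [mul_comm _ m₀]; exact_mod_cast hm₀Q.symm⟩, fun hs1 ht1 => ?_⟩
  have hr : √(s * t : ℝ) ^ 2 = s * t := Real.sq_sqrt (by positivity)
  have hex : ∀ i, ∃ ε : ℤ, ev i - (s - 1) = (if ev i = s * (t + 1) then (s * t + 1 : ℝ) else 0) +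
      (if ev i = -((t : ℝ) + 1) then -(s + t : ℝ) else 0) + ε * √(s * t : ℝ) := by
    intro i
    have hne : (s * (t + 1) : ℝ) ≠ -((t : ℝ) + 1) := by
      have : (0 : ℝ) < s * (t + 1) + (t + 1) := by positivity
      intro e
      linarith
    by_cases hk : ev i = s * (t + 1)
    · refine ⟨0, ?_⟩
      rw [if_pos hk, if_neg (hk ▸ hne), hk]
      push_cast
      ring
    by_cases h0 : ev i = -((t : ℝ) + 1)
    · refine ⟨0, ?_⟩
      rw [if_neg hk, if_pos h0, h0]
      push_cast
      ring
    have h := (mul_eq_zero.1 ((mul_eq_zero.1 (hroot i)).resolve_left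
      (sub_ne_zero.2 hk))).resolve_left fun e => h0 (by linear_combination e)
    rw [← hr, sub_eq_zero, sq_eq_sq_iff_eq_or_eq_neg] at h
    rcases h with h | h
    · exact ⟨1, by rw [if_neg hk, if_neg h0, h]; push_cast; ring⟩
    · exact ⟨-1, by rw [if_neg hk, if_neg h0, h]; push_cast; ring⟩
  choose ε hε using hex
  have hsum : ∑ i, (ev i - (s - 1)) =
      mk * (s * t + 1 : ℝ) + m₀ * (-(s + t : ℝ)) + (∑ i, ε i : ℤ) * √(s * t : ℝ) := by
    rw [Finset.sum_congr rfl fun i _ => hε i]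
    simp only [Finset.sum_add_distrib, ← Finset.sum_filter, Finset.sum_const, nsmul_eq_mul,
      Int.cast_sum, Finset.sum_mul, hmk, hm₀]
    ring
  rw [Finset.sum_sub_distrib, h₁, Finset.sum_const, Finset.card_univ, nsmul_eq_mul, hcard,
    hmk1] at hsum
  have hD : ((∑ i, ε i : ℤ) * (s ^ 2 + s * t + t ^ 2) : ℝ) * √(s * t : ℝ) =
      -(s ^ 2 * t ^ 2 * (s ^ 2 - 1) * (t ^ 2 - 1)) := by
    linear_combination -(s ^ 2 + s * t + t ^ 2 : ℝ) * hsum + (s + t : ℝ) * hm₀Q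
  refine Nat.isSquare_of_mul_sq_eq_sq (a := (∑ i, ε i) * (s ^ 2 + s * t + t ^ 2))
    (b := -(s ^ 2 * t ^ 2 * (s ^ 2 - 1) * (t ^ 2 - 1))) ?_ ?_
  · have : ∀ m : ℕ, 1 < m → (m : ℤ) ^ 2 - 1 ≠ 0 := fun m hm => by
      have : (1 : ℤ) < m := by exact_mod_cast hm
      nlinarith
    have h1 := this s hs1
    have h2 := this t ht1
    simp [h1, h2, hs.ne', ht.ne']
  · have h := congrArg (· ^ 2) hD
    simp only [mul_pow _ (√(s * t : ℝ)), hr] at h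
    have h' : ((s * t : ℕ) : ℝ) * (((∑ i, ε i : ℤ) : ℝ) * (s ^ 2 + s * t + t ^ 2)) ^ 2 =
        (-(s ^ 2 * t ^ 2 * (s ^ 2 - 1) * (t ^ 2 - 1))) ^ 2 := by
      rw [← h]
      push_cast
      ring
    exact_mod_cast h'

end EigenvalueArithmetic

namespace GenHexagon

variable {Γ : GenHexagon} {s t : ℕ}

section RelMatrix

open Classical in
/-- The real `0`-`1` matrix of a binary relation. -/
noncomputable def relMatrix {α : Type*} (r : α → α → Prop) : Matrix α α ℝ :=
  Matrix.of fun x y => if r x y then 1 else 0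

variable {α : Type*} {r r' : α → α → Prop} {x y : α}

theorem relMatrix_apply_of (h : r x y) : relMatrix r x y = 1 := if_pos h

theorem relMatrix_apply_of_not (h : ¬ r x y) : relMatrix r x y = 0 := if_neg h

theorem relMatrix_mul_apply [Fintype α] :
    (relMatrix r * relMatrix r') x y = ({z | r x z ∧ r' z y}.ncard : ℝ) := by
  classical
  have hite : ∀ z, relMatrix r x z * relMatrix r' z y = if r x z ∧ r' z y then 1 else 0 := by
    intro z
    by_cases h : r x z <;> by_cases h' : r' z y <;> simp [relMatrix, h, h']
  rw [Matrix.mul_apply, Finset.sum_congr rfl fun z _ => hite z, Finset.sum_boole,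
    Set.ncard_eq_toFinset_card']
  simp

theorem isHermitian_relMatrix (h : ∀ x y, r x y → r y x) : (relMatrix r).IsHermitian := by
  ext x y
  by_cases hxy : r x y
  · simp [relMatrix_apply_of hxy, relMatrix_apply_of (h _ _ hxy)]
  · simp [relMatrix_apply_of_not hxy, relMatrix_apply_of_not fun h' => hxy (h _ _ h')]

end RelMatrix

theorem eq_or_collinear_or_special_or_opposite (x y : Γ.Point) :
    x = y ∨ Γ.Collinear x y ∨ Γ.Special x y ∨ Γ.Opposite x y := by
  by_cases h : Γ.Opposite x y
  · exact .inr (.inr (.inr h))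
  · rcases not_opposite_iff.1 h with h | h | h <;> simp [h]

namespace IsHex

theorem collinear_mul_collinear [Fintype Γ.Point] [DecidableEq Γ.Point] (h : Γ.IsHex)
    (hord : Γ.HasOrder s t) (hs : 0 < s) :
    relMatrix Γ.Collinear * relMatrix Γ.Collinear =
      (s * (t + 1) : ℝ) • (1 : Matrix Γ.Point Γ.Point ℝ) +
        (s - 1 : ℝ) • relMatrix Γ.Collinear + relMatrix Γ.Special := by
  ext x y
  simp only [relMatrix_mul_apply, Matrix.add_apply, Matrix.smul_apply, smul_eq_mul]
  rcases eq_or_collinear_or_special_or_opposite x y with rfl | hxy | hxy | hxy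
  · have heq : {z | Γ.Collinear x z ∧ Γ.Collinear z x} = {z | Γ.Collinear x z} :=
      Set.ext fun z => ⟨fun hz => hz.1, fun hz => ⟨hz, hz.symm⟩⟩
    rw [heq, h.ncard_collinear hord, relMatrix_apply_of_not fun h => h.1 rfl,
      relMatrix_apply_of_not fun h => h.1 rfl, Matrix.one_apply_eq]
    push_cast
    ring
  · rw [h.ncard_collinear_collinear hord hxy, relMatrix_apply_of hxy,
      relMatrix_apply_of_not fun h => h.2.1 hxy, Matrix.one_apply_ne hxy.1, Nat.cast_sub hs]
    push_cast
    ring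
  · rw [h.ncard_collinear_collinear_of_special hxy, relMatrix_apply_of hxy,
      relMatrix_apply_of_not hxy.2.1, Matrix.one_apply_ne hxy.1]
    push_cast
    ring
  · have heq : {z | Γ.Collinear x z ∧ Γ.Collinear z y} = ∅ :=
      Set.eq_empty_of_forall_notMem fun z hz =>
        hxy.2.2 ⟨hxy.1, hxy.2.1, z, hz.1, hz.2.symm⟩
    rw [heq, relMatrix_apply_of_not hxy.2.1, relMatrix_apply_of_not hxy.2.2,
      Matrix.one_apply_ne hxy.1]
    simp

theorem collinear_mul_special [Fintype Γ.Point] (h : Γ.IsHex)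
    (hord : Γ.HasOrder s t) (hs : 0 < s) :
    relMatrix Γ.Collinear * relMatrix Γ.Special =
      (s * t : ℝ) • relMatrix Γ.Collinear + (s - 1 : ℝ) • relMatrix Γ.Special +
        (t + 1 : ℝ) • relMatrix Γ.Opposite := by
  ext x y
  simp only [relMatrix_mul_apply, Matrix.add_apply, Matrix.smul_apply, smul_eq_mul]
  rcases eq_or_collinear_or_special_or_opposite x y with rfl | hxy | hxy | hxy
  · have heq : {z | Γ.Collinear x z ∧ Γ.Special z x} = ∅ :=
      Set.eq_empty_of_forall_notMem fun z hz => hz.2.2.1 hz.1.symm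
    rw [heq, relMatrix_apply_of_not fun h => h.1 rfl, relMatrix_apply_of_not fun h => h.1 rfl,
      relMatrix_apply_of_not fun h => h.1 rfl]
    simp
  · rw [h.ncard_collinear_special_of_collinear hord hxy, relMatrix_apply_of hxy,
      relMatrix_apply_of_not fun h => h.2.1 hxy, relMatrix_apply_of_not fun h => h.2.1 hxy]
    push_cast
    ring
  · rw [h.ncard_collinear_special_of_special hord hxy, relMatrix_apply_of hxy,
      relMatrix_apply_of_not hxy.2.1, relMatrix_apply_of_not fun h => h.2.2 hxy, Nat.cast_sub hs]
    push_cast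
    ring
  · rw [h.ncard_collinear_special_of_opposite hord hxy, relMatrix_apply_of hxy,
      relMatrix_apply_of_not hxy.2.1, relMatrix_apply_of_not hxy.2.2]
    push_cast
    ring

theorem sum_relMatrix [DecidableEq Γ.Point] :
    (1 : Matrix Γ.Point Γ.Point ℝ) + relMatrix Γ.Collinear + relMatrix Γ.Special +
      relMatrix Γ.Opposite = relMatrix fun _ _ => True := by
  ext x y
  simp only [Matrix.add_apply]
  rw [relMatrix_apply_of (r := fun _ _ : Γ.Point => True) trivial]
  rcases eq_or_collinear_or_special_or_opposite x y with rfl | hxy | hxy | hxy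
  · rw [relMatrix_apply_of_not fun h => h.1 rfl, relMatrix_apply_of_not fun h => h.1 rfl,
      relMatrix_apply_of_not fun h => h.1 rfl, Matrix.one_apply_eq]
    simp
  · rw [relMatrix_apply_of hxy, relMatrix_apply_of_not fun h => h.2.1 hxy,
      relMatrix_apply_of_not fun h => h.2.1 hxy, Matrix.one_apply_ne hxy.1]
    simp
  · rw [relMatrix_apply_of hxy, relMatrix_apply_of_not hxy.2.1,
      relMatrix_apply_of_not fun h => h.2.2 hxy, Matrix.one_apply_ne hxy.1]
    simp
  · rw [relMatrix_apply_of hxy, relMatrix_apply_of_not hxy.2.1, relMatrix_apply_of_not hxy.2.2,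
      Matrix.one_apply_ne hxy.1]
    simp

theorem collinear_mul_true [Fintype Γ.Point] (h : Γ.IsHex) (hord : Γ.HasOrder s t) :
    relMatrix Γ.Collinear * relMatrix (fun _ _ => True) =
      (s * (t + 1) : ℝ) • relMatrix fun _ _ => True := by
  ext x y
  rw [relMatrix_mul_apply, Matrix.smul_apply,
    relMatrix_apply_of (r := fun _ _ : Γ.Point => True) trivial]
  simp only [and_true]
  rw [h.ncard_collinear hord]
  push_cast
  ring

open Polynomial in
/-- The number of points of a finite generalised hexagon, and the divisibility and squareness
conditions of Feit and Higman. -/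
theorem feit_higman [Nonempty Γ.Point] (h : Γ.IsHex) (hord : Γ.HasOrder s t) (hs : 0 < s)
    (ht : 0 < t) : Nat.card Γ.Point = (s + 1) * (1 + s * t + s ^ 2 * t ^ 2) ∧
      s ^ 2 + s * t + t ^ 2 ∣ s ^ 3 * (1 + s * t + s ^ 2 * t ^ 2) ∧
      (1 < s → 1 < t → IsSquare (s * t)) := by
  classical
  have := h.finite_point hord
  have := Fintype.ofFinite Γ.Point
  have hsq := h.collinear_mul_collinear hord hs
  have hcs := h.collinear_mul_special hord hs
  have hsum := sum_relMatrix (Γ := Γ)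
  have hAJ := h.collinear_mul_true hord
  have htrA : (relMatrix Γ.Collinear).trace = 0 :=
    Finset.sum_eq_zero fun x _ => relMatrix_apply_of_not fun h => h.1 rfl
  have htrS : (relMatrix Γ.Special).trace = 0 :=
    Finset.sum_eq_zero fun x _ => relMatrix_apply_of_not fun h => h.1 rfl
  have htrO : (relMatrix Γ.Opposite).trace = 0 :=
    Finset.sum_eq_zero fun x _ => relMatrix_apply_of_not fun h => h.1 rfl
  have hJJ : relMatrix (fun _ _ : Γ.Point => True) * relMatrix (fun _ _ => True) =
      (Fintype.card Γ.Point : ℝ) • relMatrix fun _ _ => True := by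
    ext x y
    rw [relMatrix_mul_apply, Matrix.smul_apply,
      relMatrix_apply_of (r := fun _ _ : Γ.Point => True) trivial]
    simp [Set.ncard_univ]
  have hJ0 : relMatrix (fun _ _ : Γ.Point => True) ≠ 0 := fun e => by
    have x := Classical.arbitrary Γ.Point
    have := congrFun (congrFun e x) x
    rw [relMatrix_apply_of (r := fun _ _ : Γ.Point => True) trivial] at this
    exact one_ne_zero this
  obtain ⟨ev, htr, hroot⟩ := (isHermitian_relMatrix (r := Γ.Collinear)
    fun _ _ h => h.symm).exists_trace_aeval_eq_sum
  generalize relMatrix Γ.Collinear = A at *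
  generalize relMatrix Γ.Special = B at *
  generalize relMatrix Γ.Opposite = D at *
  generalize relMatrix (fun _ _ : Γ.Point => True) = J at *
  have hB : B = A * A - (s * (t + 1) : ℝ) • 1 - (s - 1 : ℝ) • A := by
    rw [hsq]
    abel
  have hpoly : ∀ a b c : ℝ, aeval A (X ^ 3 + C a * X ^ 2 + C b * X + C c : ℝ[X]) =
      A * (A * A) + a • (A * A) + b • A + c • 1 := by
    intro a b c
    simp only [map_add, map_mul, aeval_X, aeval_C, Algebra.algebraMap_eq_smul_one,
      smul_mul_assoc, one_mul, pow_succ, pow_zero, mul_assoc]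
  have hAB : A * B = A * (A * A) - (s * (t + 1) : ℝ) • A - (s - 1 : ℝ) • (A * A) := by
    rw [hB, mul_sub, mul_sub, mul_smul_comm, mul_smul_comm, mul_one]
  obtain ⟨a, ha⟩ : ∃ a : ℝ, a = t + 1 - 2 * (s - 1) := ⟨_, rfl⟩
  obtain ⟨b, hb⟩ : ∃ b : ℝ, b = (s - 1) ^ 2 - s * t - 2 * (s - 1) * (t + 1) := ⟨_, rfl⟩
  obtain ⟨c, hc⟩ : ∃ c : ℝ, c = (t + 1) * ((s - 1) ^ 2 - s * t) := ⟨_, rfl⟩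
  have hP : A * (A * A) + a • (A * A) + b • A + c • 1 = (t + 1 : ℝ) • J := by
    rw [ha, hb, hc]
    linear_combination (norm := module) (t + 1 : ℝ) • hsum - hAB + hcs - (t + 2 - s : ℝ) • hB
  have hcard : (Fintype.card Γ.Point : ℝ) = (s + 1) * (1 + s * t + s ^ 2 * t ^ 2) := by
    have h' := congrArg (· * J) hP
    simp only [add_mul, smul_mul_assoc, mul_assoc, hAJ, mul_smul_comm, hJJ, smul_smul, one_mul,
      ← add_smul] at h'
    have h'' := smul_left_injective ℝ hJ0 h'
    have hpos : (0 : ℝ) < t + 1 := by positivity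
    rw [ha, hb, hc] at h''
    exact mul_right_cancel₀ hpos.ne' (by linear_combination -h'')
  have hsums : (∑ i, ev i = 0) ∧ (∑ i, ev i ^ 2 = Fintype.card Γ.Point * (s * (t + 1))) ∧
      ∑ i, ev i ^ 3 = Fintype.card Γ.Point * (s * (t + 1)) * (s - 1) := by
    have h1 := htr X
    have h2 := htr (X ^ 2)
    have h3 := htr (X ^ 3)
    simp only [eval_pow, eval_X, map_pow, aeval_X] at h1 h2 h3
    rw [← h1, ← h2, ← h3]
    have htr2 : (A * A).trace = Fintype.card Γ.Point * (s * (t + 1)) := by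
      rw [hsq]
      simp [htrA, htrS, Matrix.trace_smul, mul_comm]
    have htr3 := congrArg Matrix.trace hAB
    rw [hcs] at htr3
    simp only [Matrix.trace_add, Matrix.trace_sub, Matrix.trace_smul, htrA, htrS, htrO, htr2,
      smul_eq_mul] at htr3
    refine ⟨htrA, by rw [pow_two, htr2], ?_⟩
    rw [pow_succ', pow_two]
    linear_combination -htr3
  refine ⟨?_, eigenvalue_arithmetic hs ht hcard hsums.1 hsums.2.1 hsums.2.2 fun i => ?_⟩
  · rw [Nat.card_eq_fintype_card]
    exact_mod_cast hcard
  · have hq := hroot ((X - C (s * (t + 1) : ℝ)) * (X ^ 3 + C a * X ^ 2 + C b * X + C c)) (by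
      rw [map_mul, hpoly, hP, map_sub, aeval_X, aeval_C, Algebra.algebraMap_eq_smul_one,
        mul_smul_comm, sub_mul, hAJ, smul_mul_assoc, one_mul, sub_self, smul_zero]) i
    simp only [eval_mul, eval_sub, eval_add, eval_pow, eval_X, eval_C] at hq
    rw [← hq, ha, hb, hc]
    ring

end IsHex

end GenHexagon

theorem Nat.card_mul_eq_card_mul_of_ncard {α β : Type*} [Finite α] [Finite β] (r : α → β → Prop)
    {m n : ℕ} (hm : ∀ a, {b | r a b}.ncard = m) (hn : ∀ b, {a | r a b}.ncard = n) :
    Nat.card α * m = Nat.card β * n := by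
  classical
  have := Fintype.ofFinite α
  have := Fintype.ofFinite β
  rw [Nat.card_eq_fintype_card, Nat.card_eq_fintype_card, ← Finset.card_univ, ← Finset.card_univ]
  refine Finset.card_mul_eq_card_mul r (fun a _ => ?_) fun b _ => ?_
  · rw [← hm a, ← Set.ncard_coe_finset]
    simp [Finset.bipartiteAbove]
  · rw [← hn b, ← Set.ncard_coe_finset]
    simp [Finset.bipartiteBelow]

namespace GenHexagon

variable {Γ : GenHexagon} {s t : ℕ}

theorem IsHex.finite_line (h : Γ.IsHex) (hord : Γ.HasOrder s t) (hs : 0 < s) :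
    Finite Γ.Line := by
  have := h.finite_point hord
  refine Finite.of_injective Γ.pts fun L M hLM => ?_
  obtain ⟨x, y, hx, hy, hxy⟩ := (Set.one_lt_ncard_iff (hord.finite_pts L)).1
    (by rw [hord.ncard_pts]; omega)
  exact h.line_unique hxy hx hy (hLM ▸ hx) (hLM ▸ hy)

theorem IsSaturated.eq_sq_add_self {S : Set Γ.Point} {e : ℕ} (h : Γ.IsSaturated s t S)
    (he : 0 < e) (hord : (Γ.sub S).HasOrder e t) : s = (e * t) ^ 2 + e * t := by
  obtain ⟨x₀, hx₀⟩ := h.nontrivial.nonempty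
  have : Nonempty (Γ.sub S).Point := ⟨⟨x₀, Or.inl hx₀⟩⟩
  have := h.sub_isHex.finite_point hord
  have := h.sub_isHex.finite_line hord he
  have := h.finite.to_subtype
  have ht := h.one_lt_t
  have h₁ := Nat.card_mul_eq_card_mul_of_ncard
    (fun (x : S) (L : (Γ.sub S).Line) => x.1 ∈ Γ.pts L.1) (m := t + 1) (n := 1)
    (fun x => hord.ncard_lines ⟨x.1, Or.inl x.2⟩) fun L => by
      obtain ⟨x, hx, hxL⟩ := L.2
      refine Set.ncard_eq_one.2 ⟨⟨x, hx⟩, Set.ext fun y => ⟨fun hy => ?_, ?_⟩⟩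
      · exact Subtype.ext (h.eq_of_mem y.2 hx hy hxL)
      · rintro rfl
        exact hxL
  have h₂ := Nat.card_mul_eq_card_mul_of_ncard
    (fun (u : (Γ.sub S).Point) (L : (Γ.sub S).Line) => u ∈ (Γ.sub S).pts L)
    hord.ncard_lines hord.ncard_pts
  rw [(h.sub_isHex.feit_higman hord he (by omega)).1] at h₂
  have hS : Nat.card S = s + 1 := h.ncard_eq
  rw [hS, mul_one] at h₁
  rw [← h₁] at h₂
  have h₃ : 1 + e * t + e ^ 2 * t ^ 2 = s + 1 :=
    Nat.eq_of_mul_eq_mul_right (show 0 < (e + 1) * (t + 1) by positivity)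
      (by linear_combination h₂)
  linarith [mul_pow e t 2]

theorem not_dvd_of_eq_sq_add_self (ht : 1 < t) (hst : s = t ^ 2 + t) :
    ¬ s ^ 2 + s * t + t ^ 2 ∣ s ^ 3 * (1 + s * t + s ^ 2 * t ^ 2) := by
  subst hst
  intro hdvd
  have h₁ : t ^ 2 * (t ^ 2 + 3 * t + 3) ∣ t ^ 2 *
      (t * (t + 1) ^ 3 * (1 + t ^ 2 * (t + 1) + t ^ 4 * (t + 1) ^ 2)) := by
    convert hdvd using 1 <;> ring
  have h₂ := Nat.dvd_of_mul_dvd_mul_left (by positivity) h₁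
  have h₃ : t ^ 2 + 3 * t + 3 ∣ 4 * (5 * t + 9) := by
    zify at h₂ ⊢
    refine (dvd_add_right h₂).1 ⟨(t : ℤ) ^ 8 + 2 * t ^ 7 + t ^ 6 + 2 * t ^ 5 + t ^ 3 + 2 * t ^ 2 -
      5 * t + 12, by ring⟩
  have h₄ := Nat.le_of_dvd (by positivity) h₃
  have h₅ : t < 19 := by nlinarith
  interval_cases t <;> revert h₃ <;> decide

theorem isSquare_consecutive {n : ℕ} (h₁ : IsSquare n) (h₂ : IsSquare (n + 1)) : n = 0 := by
  obtain ⟨a, rfl⟩ := h₁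
  obtain ⟨b, hb⟩ := h₂
  have hab : a < b := by nlinarith
  have ha : a = 0 := by nlinarith
  rw [ha]

theorem IsSaturated.false {S : Set Γ.Point} (h : Γ.IsSaturated s t S) : False := by
  obtain ⟨e, he, hord⟩ := h.exists_sub_hasOrder
  obtain ⟨x₀, hx₀⟩ := h.nontrivial.nonempty
  have : Nonempty (Γ.sub S).Point := ⟨⟨x₀, Or.inl hx₀⟩⟩
  have : Nonempty Γ.Point := ⟨x₀⟩
  have hs := h.one_lt_s
  have ht := h.one_lt_t
  have hst := h.eq_sq_add_self he hord
  obtain ⟨-, hdvd, hsq⟩ := h.hex.feit_higman h.order (by omega) (by omega)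
  obtain rfl | he1 : e = 1 ∨ 1 < e := by omega
  · exact not_dvd_of_eq_sq_add_self ht (by simpa using hst) hdvd
  have hsq' := (h.sub_isHex.feit_higman hord he (by omega)).2.2 he1 ht
  have hcop : IsSquare (e * (e * t + 1)) := by
    obtain ⟨c, hc⟩ := hsq hs ht
    have hc' : e * (e * t + 1) * t ^ 2 = c ^ 2 := by
      rw [sq c, ← hc, hst]
      ring
    obtain ⟨d, rfl⟩ : t ∣ c := (Nat.pow_dvd_pow_iff two_ne_zero).1 ⟨e * (e * t + 1), by rw [← hc']; ring⟩
    exact ⟨d, Nat.eq_of_mul_eq_mul_right (show 0 < t ^ 2 by positivity) (by rw [hc']; ring)⟩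
  have hsucc : IsSquare (e * t + 1) := by
    obtain ⟨c, hc⟩ := hcop
    obtain ⟨d, hd⟩ := exists_eq_pow_of_mul_eq_pow (a := e * t + 1) (b := e) (c := c) (k := 2)
      (Nat.isUnit_iff.2 (by simp [gcd_eq_nat_gcd])) (by rw [sq c, ← hc, mul_comm])
    exact ⟨d, by rw [hd, sq]⟩
  have := isSquare_consecutive hsq' hsucc
  exact (Nat.mul_pos he (by omega)).ne' this

end GenHexagon

/-- A set of `s + 1` points of a generalised hexagon of order `(s, t)`, `s, t > 1`,
admitting no opposite point, is a line, a hyperbolic line (and then `s = t`), or a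
regular distance-3 trace (and then `s ≥ t`). -/
theorem blocking_set_hexagon (Γ : GenHexagon) (hΓ : Γ.IsGenHexagon) (s t : ℕ)
    (hs : 1 < s) (ht : 1 < t) (hord : Γ.HasOrder s t)
    (S : Set Γ.Point) (hS : S.encard = s + 1)
    (hblock : ¬ ∃ y : Γ.Point, ∀ x ∈ S, Γ.Opposite y x) :
    (∃ L, S = Γ.pts L) ∨
    (Γ.IsHyperbolicLine S ∧ s = t) ∨
    ((∃ L M, Γ.OppLines L M ∧ S = Γ.trace3 L M ∧ Γ.RegularTrace3 L M) ∧ t ≤ s) := by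
  have h : Γ.IsBlocking s t S :=
    ⟨hΓ.isHex, hord, hs, ht, hS, fun y => by simpa using not_exists.1 hblock y⟩
  by_cases hnc : ∀ x ∈ S, ∀ y ∈ S, ¬ Γ.Collinear x y
  swap
  · push Not at hnc
    obtain ⟨x, hx, y, hy, hne, L, hxL, hyL⟩ := hnc
    exact .inl ⟨L, h.eq_pts_of_collinear hx hy hne hxL hyL⟩
  have h' : Γ.IsPartialBlocking s t S := ⟨h, hnc⟩
  right
  rcases (Γ.centers S).eq_empty_or_nonempty with hc | ⟨p, hp⟩
  · refine .inr (h.regular_trace_of_pairwise_opposite fun x hx y hy hxy =>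
      ⟨hxy, hnc x hx y hy, ?_⟩)
    rintro ⟨-, -, z, hxz, hyz⟩
    exact Set.notMem_empty z (hc ▸ ⟨x, hx, y, hy, hxy, hxz, hyz⟩)
  · refine .inl (h.hyperbolic_of_forall_collinear hnc (p := p) fun w hw => ?_)
    by_contra hwp
    exact GenHexagon.IsSaturated.false ⟨h', fun x hx A hxA => h'.exists_mem_centers hw hp hwp hx hxA⟩
end

section
/- Let Γ be a generalised hexagon of finite order (s,t) with s > 1 and t > 1, and let S be a set of s+1 points of Γ such that no point of Γ is opposite every member of S. If S contains two distinct collinear points, then S is the point set of a line of Γ. -/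
/-- In a connected graph, two distinct neighbours of `b` which are both closer to `a` than `b` is
give rise to a cycle of length at most twice the distance from `a` to `b`. -/
theorem SimpleGraph.Connected.egirth_le_of_two_closer_neighbors {V : Type*} {G : SimpleGraph V}
    (hG : G.Connected) {a b c c' : V} (hc : G.Adj b c) (hc' : G.Adj b c')
    (hlt : G.dist a c < G.dist a b) (hlt' : G.dist a c' < G.dist a b) (hne : c ≠ c') :
    G.egirth ≤ (2 * G.dist a b : ℕ) := by
  classical
  have notMem : ∀ {v : V} (p : G.Walk a v), p.length < G.dist a b → b ∉ p.support := by
    intro v p hp hb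
    have h₁ := G.dist_le (p.takeUntil b hb)
    have h₂ := p.length_takeUntil_le_length hb
    omega
  obtain ⟨p, hp⟩ := hG.exists_walk_length_eq_dist a c
  obtain ⟨p', hp'⟩ := hG.exists_walk_length_eq_dist a c'
  have hbp := notMem p (by omega)
  have hbp' := notMem p' (by omega)
  let w : G.Walk c b := p.reverse.append (p'.append (.cons hc'.symm .nil))
  have hw : s(b, c) ∉ w.edges := by
    simp only [w, SimpleGraph.Walk.edges_append, SimpleGraph.Walk.edges_reverse,
      SimpleGraph.Walk.edges_cons, SimpleGraph.Walk.edges_nil, List.mem_append, List.mem_reverse,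
      List.mem_singleton, not_or]
    refine ⟨fun h ↦ hbp (p.fst_mem_support_of_mem_edges h),
      fun h ↦ hbp' (p'.fst_mem_support_of_mem_edges h), fun h ↦ ?_⟩
    rw [Sym2.eq_swap, Sym2.congr_left] at h
    exact hne h
  have hcycle : (SimpleGraph.Walk.cons hc w.bypass).IsCycle :=
    (SimpleGraph.Walk.cons_isCycle_iff _ _).2
      ⟨w.bypass_isPath, fun h ↦ hw (w.edges_bypass_subset_edges h)⟩
  refine (SimpleGraph.egirth_le_length hcycle).trans ?_
  have hlen := w.length_bypass_le_length
  simp only [w, SimpleGraph.Walk.length_append, SimpleGraph.Walk.length_reverse,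
    SimpleGraph.Walk.length_cons, SimpleGraph.Walk.length_nil] at hlen
  rw [SimpleGraph.Walk.length_cons]
  have hle : w.bypass.length + 1 ≤ 2 * G.dist a b := by
    change w.bypass.length ≤ _ at hlen
    omega
  exact_mod_cast hle

/-- If each element of `T` rules out at most one point, then a set with more than `|T| + 1` points
has a point other than `w` that is not ruled out. -/
theorem Set.exists_mem_ne_forall_not_of_encard_lt {α β : Type*} {A : Set α} {T : Set β} {n : ℕ}
    (hA : A.encard = n + 1) (hT : T.encard < n) {w : α} (hw : w ∈ A) (R : β → α → Prop)
    (hR : ∀ q ∈ T, ∀ x ∈ A, ∀ y ∈ A, R q x → R q y → x = y) :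
    ∃ y ∈ A, y ≠ w ∧ ∀ q ∈ T, ¬ R q y := by
  by_contra! h
  have : Nonempty β := by
    by_contra hβ
    have hA' : A ⊆ {w} := fun y hy ↦ by
      by_contra hyw
      exact hβ ⟨(h y hy hyw).choose⟩
    have hle := Set.encard_le_encard hA'
    rw [hA, Set.encard_singleton] at hle
    have hn : n = 0 := by
      norm_cast at hle
      omega
    simp [hn] at hT
  choose! f hfT hfR using h
  have hle : (A \ {w}).encard ≤ T.encard := by
    refine Set.encard_le_encard_of_injOn (f := f) (fun y hy ↦ hfT y hy.1 hy.2) ?_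
    intro x hx y hy hxy
    refine hR (f x) (hfT x hx.1 hx.2) x hx.1 y hy.1 (hfR x hx.1 hx.2) ?_
    rw [hxy]
    exact hfR y hy.1 hy.2
  have hcard := Set.encard_sdiff_singleton_add_one hw
  rw [hA] at hcard
  rw [ENat.add_left_injective_of_ne_top ENat.one_ne_top hcard] at hle
  exact absurd hT (not_lt.2 hle)

namespace GenHexagon

variable {Γ : GenHexagon}

/-- The distance between two points in the incidence graph. -/
noncomputable def pdist (Γ : GenHexagon) (q x : Γ.Point) : ℕ :=
  Γ.incGraph.dist (Sum.inl q) (Sum.inl x)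

/-- The distance between a point and a line in the incidence graph. -/
noncomputable def ldist (Γ : GenHexagon) (q : Γ.Point) (K : Γ.Line) : ℕ :=
  Γ.incGraph.dist (Sum.inl q) (Sum.inr K)

/-- The proper colouring of the incidence graph separating points from lines. -/
def incColoring (Γ : GenHexagon) : Γ.incGraph.Coloring Bool :=
  SimpleGraph.Coloring.mk Sum.isLeft (by rintro (x | K) (y | M) h <;> simp_all [incGraph, incAdj])

theorem adj_inl_inr {x : Γ.Point} {K : Γ.Line} (h : x ∈ Γ.pts K) :
    Γ.incGraph.Adj (Sum.inl x) (Sum.inr K) := h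

theorem IsGenHexagon.connected (hΓ : Γ.IsGenHexagon) (q : Γ.Point) : Γ.incGraph.Connected := by
  have : Nonempty (Γ.Point ⊕ Γ.Line) := ⟨Sum.inl q⟩
  refine SimpleGraph.connected_of_ediam_ne_top ?_
  rw [hΓ.1]
  exact ENat.natCast_ne_top 6

theorem IsGenHexagon.dist_le_six (hΓ : Γ.IsGenHexagon) (a b : Γ.Point ⊕ Γ.Line) :
    Γ.incGraph.dist a b ≤ 6 := by
  have h := SimpleGraph.dist_le_diam (G := Γ.incGraph) (u := a) (v := b)
    (by rw [hΓ.1]; exact ENat.natCast_ne_top 6)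
  rwa [SimpleGraph.diam, hΓ.1] at h

theorem IsGenHexagon.closer_unique (hΓ : Γ.IsGenHexagon) {q : Γ.Point} {b c c' : Γ.Point ⊕ Γ.Line}
    (hb : Γ.incGraph.dist (Sum.inl q) b ≤ 5) (hc : Γ.incGraph.Adj b c) (hc' : Γ.incGraph.Adj b c')
    (hlt : Γ.incGraph.dist (Sum.inl q) c < Γ.incGraph.dist (Sum.inl q) b)
    (hlt' : Γ.incGraph.dist (Sum.inl q) c' < Γ.incGraph.dist (Sum.inl q) b) : c = c' := by
  by_contra hne
  have h := (hΓ.connected q).egirth_le_of_two_closer_neighbors hc hc' hlt hlt' hne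
  rw [hΓ.2] at h
  have : 12 ≤ 2 * Γ.incGraph.dist (Sum.inl q) b := by exact_mod_cast h
  omega

theorem IsGenHexagon.even_pdist (hΓ : Γ.IsGenHexagon) (q x : Γ.Point) : Even (Γ.pdist q x) := by
  obtain ⟨p, hp⟩ := (hΓ.connected q).exists_walk_length_eq_dist (Sum.inl q) (Sum.inl x)
  rw [pdist, ← hp, Γ.incColoring.even_length_iff_congr p]
  exact Iff.rfl

theorem IsGenHexagon.odd_ldist (hΓ : Γ.IsGenHexagon) (q : Γ.Point) (K : Γ.Line) :
    Odd (Γ.ldist q K) := by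
  obtain ⟨p, hp⟩ := (hΓ.connected q).exists_walk_length_eq_dist (Sum.inl q) (Sum.inr K)
  rw [ldist, ← hp, Γ.incColoring.odd_length_iff_not_congr p]
  change (¬ true = true ↔ false = true)
  simp

theorem IsGenHexagon.ldist_le_five (hΓ : Γ.IsGenHexagon) (q : Γ.Point) (K : Γ.Line) :
    Γ.ldist q K ≤ 5 := by
  have h : Γ.ldist q K ≤ 6 := hΓ.dist_le_six _ _
  obtain ⟨k, hk⟩ := hΓ.odd_ldist q K
  omega

theorem IsGenHexagon.pdist_eq_or (hΓ : Γ.IsGenHexagon) (q : Γ.Point) {x : Γ.Point} {K : Γ.Line}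
    (h : x ∈ Γ.pts K) :
    Γ.pdist q x = Γ.ldist q K + 1 ∨ Γ.pdist q x + 1 = Γ.ldist q K := by
  have hd := (adj_inl_inr h).diff_dist_adj (u := Sum.inl q)
  obtain ⟨k, hk⟩ := hΓ.even_pdist q x
  obtain ⟨l, hl⟩ := hΓ.odd_ldist q K
  unfold pdist ldist at *
  omega

theorem IsGenHexagon.closer_point_unique (hΓ : Γ.IsGenHexagon) {q x y : Γ.Point} {K : Γ.Line}
    (hx : x ∈ Γ.pts K) (hy : y ∈ Γ.pts K) (hlt : Γ.pdist q x < Γ.ldist q K)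
    (hlt' : Γ.pdist q y < Γ.ldist q K) : x = y :=
  Sum.inl_injective <| hΓ.closer_unique (hΓ.ldist_le_five q K) (adj_inl_inr hx).symm
    (adj_inl_inr hy).symm hlt hlt'

theorem IsGenHexagon.closer_line_unique (hΓ : Γ.IsGenHexagon) {q x : Γ.Point} {K M : Γ.Line}
    (hd : Γ.pdist q x ≤ 5) (hK : x ∈ Γ.pts K) (hM : x ∈ Γ.pts M)
    (hlt : Γ.ldist q K < Γ.pdist q x) (hlt' : Γ.ldist q M < Γ.pdist q x) : K = M :=
  Sum.inr_injective <| hΓ.closer_unique hd (adj_inl_inr hK) (adj_inl_inr hM) hlt hlt'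

theorem pdist_self (q : Γ.Point) : Γ.pdist q q = 0 := SimpleGraph.dist_self

theorem ldist_of_mem {q : Γ.Point} {K : Γ.Line} (h : q ∈ Γ.pts K) : Γ.ldist q K = 1 :=
  SimpleGraph.dist_eq_one_iff_adj.2 (adj_inl_inr h)

theorem IsGenHexagon.three_le_ldist (hΓ : Γ.IsGenHexagon) {q : Γ.Point} {K : Γ.Line}
    (h : q ∉ Γ.pts K) : 3 ≤ Γ.ldist q K := by
  obtain ⟨k, hk⟩ := hΓ.odd_ldist q K
  have h₁ : Γ.ldist q K ≠ 1 := fun h₁ ↦ h (SimpleGraph.dist_eq_one_iff_adj.1 h₁)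
  omega

theorem IsGenHexagon.pdist_pos (hΓ : Γ.IsGenHexagon) {q x : Γ.Point} (h : q ≠ x) :
    0 < Γ.pdist q x :=
  (hΓ.connected q).pos_dist_of_ne (Sum.inl_injective.ne h)

theorem Collinear.pdist_le (hΓ : Γ.IsGenHexagon) {x y : Γ.Point} (h : Γ.Collinear x y) :
    Γ.pdist x y ≤ 2 := by
  obtain ⟨-, K, hx, hy⟩ := h
  have h₁ := ldist_of_mem hx
  have h₂ := hΓ.pdist_eq_or x hy
  omega

theorem pdist_comm (x y : Γ.Point) : Γ.pdist x y = Γ.pdist y x := SimpleGraph.dist_comm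

theorem IsGenHexagon.opposite_of_four_lt_pdist (hΓ : Γ.IsGenHexagon) {x y : Γ.Point}
    (h : 4 < Γ.pdist x y) : Γ.Opposite y x := by
  rw [pdist_comm] at h
  refine ⟨?_, fun hc ↦ ?_, ?_⟩
  · rintro rfl
    simp [pdist_self] at h
  · have := hc.pdist_le hΓ
    omega
  · rintro ⟨-, -, z, hy, hx⟩
    have h₁ := hy.pdist_le hΓ
    have h₂ := hx.symm.pdist_le hΓ
    have h₃ : Γ.pdist y x ≤ Γ.pdist y z + Γ.pdist z x := (hΓ.connected x).dist_triangle
    omega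

/-- Two lines with two distinct common points are equal. -/
theorem IsGenHexagon.eq_of_mem_of_mem (hΓ : Γ.IsGenHexagon) {x y : Γ.Point} {K M : Γ.Line}
    (hxK : x ∈ Γ.pts K) (hxM : x ∈ Γ.pts M) (hyK : y ∈ Γ.pts K) (hyM : y ∈ Γ.pts M)
    (hne : x ≠ y) : K = M := by
  have h₁ := ldist_of_mem hxK
  have h₂ := ldist_of_mem hxM
  have h₃ := hΓ.pdist_pos hne
  have h₄ := hΓ.pdist_eq_or x hyK
  exact hΓ.closer_line_unique (q := x) (x := y) (by omega) hyK hyM (by omega) (by omega)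

/-- Some point of `L` outside `S` is collinear with at most one point of `S` outside `L`, if `S`
has as many points as `L` and `S ≠ L`. -/
theorem IsGenHexagon.exists_point_with_few_neighbors (hΓ : Γ.IsGenHexagon) {L : Γ.Line}
    {S : Set Γ.Point} (hfin : S.Finite) (hcard : S.encard = (Γ.pts L).encard)
    (hne : S ≠ Γ.pts L) :
    ∃ z ∈ Γ.pts L, z ∉ S ∧ ∀ q ∈ S \ Γ.pts L, ∀ q' ∈ S \ Γ.pts L,
      Γ.pdist q z ≤ 2 → Γ.pdist q' z ≤ 2 → q = q' := by
  have hdiff : (S \ Γ.pts L).encard = (Γ.pts L \ S).encard :=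
    (Set.encard_eq_encard_iff_encard_sdiff_eq_encard_sdiff
      (hfin.subset Set.inter_subset_left)).1 hcard
  have hTfin : (S \ Γ.pts L).Finite := hfin.subset Set.sdiff_subset
  by_contra! h
  have hTne : (S \ Γ.pts L).Nonempty := by
    rw [Set.nonempty_iff_ne_empty, Ne, Set.sdiff_eq_empty]
    intro hsub
    have hLS := hdiff.symm
    rw [Set.sdiff_eq_empty.2 hsub, Set.encard_empty, Set.encard_eq_zero, Set.sdiff_eq_empty] at hLS
    exact hne (hsub.antisymm hLS)
  have : Nonempty Γ.Point := hTne.to_type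
  have proj_unique : ∀ q ∈ S \ Γ.pts L, ∀ z ∈ Γ.pts L, ∀ z' ∈ Γ.pts L,
      Γ.pdist q z ≤ 2 → Γ.pdist q z' ≤ 2 → z = z' := by
    intro q hq z hz z' hz' h₁ h₂
    have h₃ := hΓ.three_le_ldist hq.2
    exact hΓ.closer_point_unique (q := q) hz hz' (by omega) (by omega)
  choose! f hf g hg hfz hgz hfg using h
  have himage : Set.image f (Γ.pts L \ S) = S \ Γ.pts L := by
    refine hTfin.eq_of_subset_of_encard_le' ?_ ?_
    · rintro _ ⟨z, hz, rfl⟩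
      exact hf z hz.1 hz.2
    · rw [hdiff, Set.InjOn.encard_image]
      intro z hz z' hz' hzz'
      refine proj_unique (f z) (hf z hz.1 hz.2) z hz.1 z' hz'.1 (hfz z hz.1 hz.2) ?_
      rw [hzz']
      exact hfz z' hz'.1 hz'.2
  obtain ⟨_, hq⟩ := hTne
  obtain ⟨z, hz, -⟩ := himage ▸ hq
  obtain ⟨z', hz', hzz'⟩ := himage ▸ hg z hz.1 hz.2
  have hz'z : z' = z := by
    refine proj_unique (g z) (hg z hz.1 hz.2) z' hz'.1 z hz.1 ?_ (hgz z hz.1 hz.2)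
    rw [← hzz']
    exact hfz z' hz'.1 hz'.2
  subst hz'z
  exact hfg z' hz.1 hz.2 hzz'

/-- A line through `z` other than `L` which misses `T`. -/
theorem IsGenHexagon.exists_line_disjoint (hΓ : Γ.IsGenHexagon) {t : ℕ} (ht : 1 < t)
    {z : Γ.Point} {L : Γ.Line} (hz : {K | z ∈ Γ.pts K}.encard = t + 1) (hzL : z ∈ Γ.pts L)
    {T : Set Γ.Point} (hzT : z ∉ T)
    (hT : ∀ q ∈ T, ∀ q' ∈ T, Γ.pdist q z ≤ 2 → Γ.pdist q' z ≤ 2 → q = q') :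
    ∃ M, z ∈ Γ.pts M ∧ M ≠ L ∧ ∀ q ∈ T, q ∉ Γ.pts M := by
  have hT' : {q ∈ T | Γ.pdist q z ≤ 2}.encard ≤ 1 :=
    Set.encard_le_one_iff.2 fun q q' hq hq' ↦ hT q hq.1 q' hq'.1 hq.2 hq'.2
  have near : ∀ {q : Γ.Point} {K : Γ.Line}, z ∈ Γ.pts K → q ∈ Γ.pts K → Γ.pdist q z ≤ 2 := by
    intro q K hzK hqK
    have h₁ := ldist_of_mem hqK
    have h₂ := hΓ.pdist_eq_or q hzK
    omega
  obtain ⟨M, hM, hML, hMT⟩ := Set.exists_mem_ne_forall_not_of_encard_lt hz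
    (hT'.trans_lt (by exact_mod_cast ht)) (show L ∈ {K | z ∈ Γ.pts K} from hzL)
    (fun q K ↦ q ∈ Γ.pts K) fun q hq K hK M hM hqK hqM ↦
      hΓ.eq_of_mem_of_mem hK hM hqK hqM fun h ↦ hzT (h ▸ hq.1)
  exact ⟨M, hM, hML, fun q hq hqM ↦ hMT q ⟨hq, near hM hqM⟩ hqM⟩

/-- Points of `L` other than `z` are opposite every point reached from `z` by a path
`z, M, w, K, y` that leaves `L` and does not turn back. -/
theorem IsGenHexagon.four_lt_pdist_of_path (hΓ : Γ.IsGenHexagon) {p z w y : Γ.Point}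
    {L M K : Γ.Line} (hp : p ∈ Γ.pts L) (hzL : z ∈ Γ.pts L) (hpz : p ≠ z) (hzM : z ∈ Γ.pts M)
    (hML : M ≠ L) (hwM : w ∈ Γ.pts M) (hwz : w ≠ z) (hwK : w ∈ Γ.pts K) (hKM : K ≠ M)
    (hyK : y ∈ Γ.pts K) (hyw : y ≠ w) : 4 < Γ.pdist p y := by
  have h₁ := ldist_of_mem hp
  have h₂ := hΓ.pdist_pos hpz
  have h₃ := hΓ.pdist_eq_or p hzL
  have h₄ : ¬ Γ.ldist p M < Γ.pdist p z := fun h ↦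
    hML (hΓ.closer_line_unique (by omega) hzM hzL h (by omega))
  have h₅ := hΓ.pdist_eq_or p hzM
  have h₆ : ¬ Γ.pdist p w < Γ.ldist p M := fun h ↦
    hwz (hΓ.closer_point_unique hwM hzM h (by omega))
  have h₇ := hΓ.pdist_eq_or p hwM
  have h₈ : ¬ Γ.ldist p K < Γ.pdist p w := fun h ↦
    hKM (hΓ.closer_line_unique (by omega) hwK hwM h (by omega))
  have h₉ := hΓ.pdist_eq_or p hwK
  have h₁₀ : ¬ Γ.pdist p y < Γ.ldist p K := fun h ↦
    hyw (hΓ.closer_point_unique hyK hwK h (by omega))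
  have h₁₁ := hΓ.pdist_eq_or p hyK
  omega

/-- If `q` is not on `M` and `w` is not the projection of `q` onto `M`, then any other line through
`w` is at maximal distance from `q`. -/
theorem IsGenHexagon.ldist_eq_five (hΓ : Γ.IsGenHexagon) {q w : Γ.Point} {M K : Γ.Line}
    (hq : q ∉ Γ.pts M) (hwM : w ∈ Γ.pts M) (hw : ¬ Γ.pdist q w < Γ.ldist q M)
    (hwK : w ∈ Γ.pts K) (hKM : K ≠ M) : Γ.ldist q K = 5 := by
  have h₁ := hΓ.three_le_ldist hq
  have h₂ := hΓ.pdist_eq_or q hwM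
  have h₃ := hΓ.pdist_eq_or q hwK
  have h₄ := hΓ.ldist_le_five q K
  obtain ⟨k, hk⟩ := hΓ.odd_ldist q M
  by_cases h : Γ.pdist q w ≤ 5
  · have h₅ : ¬ Γ.ldist q K < Γ.pdist q w := fun h' ↦
      hKM (hΓ.closer_line_unique h hwK hwM h' (by omega))
    omega
  · omega

end GenHexagon

/-- Claim 2 in the proof: if `S` contains two distinct collinear points, then `S` is
the point set of a line. -/
theorem claim2_collinear_pair_gives_line (Γ : GenHexagon) (hΓ : Γ.IsGenHexagon)
    (s t : ℕ) (hs : 1 < s) (ht : 1 < t) (hord : Γ.HasOrder s t)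
    (S : Set Γ.Point) (hS : S.encard = s + 1)
    (hblock : ¬ ∃ y : Γ.Point, ∀ x ∈ S, Γ.Opposite y x)
    (p₀ p₁ : Γ.Point) (hp₀ : p₀ ∈ S) (hp₁ : p₁ ∈ S) (hcol : Γ.Collinear p₀ p₁) :
    ∃ L, S = Γ.pts L := by
  obtain ⟨hp₀₁, L, hp₀L, hp₁L⟩ := hcol
  refine ⟨L, ?_⟩
  by_contra hne
  have hfin : S.Finite := by
    rw [← Set.encard_lt_top_iff, hS]
    exact_mod_cast ENat.natCast_lt_top (s + 1)
  have hT : (S \ Γ.pts L).encard < s := by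
    have hpair : ({p₀, p₁} : Set Γ.Point) ⊆ S ∩ Γ.pts L := by
      rintro x (rfl | rfl)
      exacts [⟨hp₀, hp₀L⟩, ⟨hp₁, hp₁L⟩]
    have h₁ := Set.encard_le_encard hpair
    rw [Set.encard_pair hp₀₁] at h₁
    have h₂ := Set.encard_sdiff_add_encard_inter S (Γ.pts L)
    rw [hS, ← (hfin.subset Set.sdiff_subset).cast_ncard_eq,
      ← (hfin.subset Set.inter_subset_left).cast_ncard_eq] at h₂
    rw [← (hfin.subset Set.inter_subset_left).cast_ncard_eq] at h₁
    rw [← (hfin.subset Set.sdiff_subset).cast_ncard_eq]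
    norm_cast at *
    omega
  obtain ⟨z, hzL, hzS, hz⟩ :=
    hΓ.exists_point_with_few_neighbors hfin (hS.trans (hord.1 L).symm) hne
  obtain ⟨M, hzM, hML, hM⟩ := hΓ.exists_line_disjoint ht (hord.2 z) hzL (fun h ↦ hzS h.1) hz
  obtain ⟨w, hwM, hwz, hw⟩ := Set.exists_mem_ne_forall_not_of_encard_lt (hord.1 M) hT hzM
    (fun q x ↦ Γ.pdist q x < Γ.ldist q M) fun q _ x hx y hy ↦ hΓ.closer_point_unique hx hy
  obtain ⟨K, hwK, hKM, -⟩ := Set.exists_mem_ne_forall_not_of_encard_lt (hord.2 w)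
    (T := (∅ : Set Γ.Point)) (by simpa using (by omega : 0 < t))
    (show M ∈ {K | w ∈ Γ.pts K} from hwM) (fun _ _ ↦ False) (by simp)
  obtain ⟨y, hyK, hyw, hy⟩ := Set.exists_mem_ne_forall_not_of_encard_lt (hord.1 K) hT hwK
    (fun q x ↦ Γ.pdist q x < Γ.ldist q K) fun q _ x hx y hy ↦ hΓ.closer_point_unique hx hy
  refine hblock ⟨y, fun q hq ↦ hΓ.opposite_of_four_lt_pdist ?_⟩
  by_cases hqL : q ∈ Γ.pts L
  · exact hΓ.four_lt_pdist_of_path hqL hzL (fun h ↦ hzS (h ▸ hq)) hzM hML hwM hwz hwK hKM hyK hyw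
  · have hqK := hΓ.ldist_eq_five (hM q ⟨hq, hqL⟩) hwM (hw q ⟨hq, hqL⟩) hwK hKM
    have := hy q ⟨hq, hqL⟩
    omega
end
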